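/- arXiv:math/0702036 — 2 statements merged into one kernel-verified Lean document; each statement's English description precedes it below -/
import Mathlib

section
/- Let ε₁ > 0 satisfy 35/64 + ε₁/4 < 1. Suppose the realization (x, y) of (X, Y) is such that x contains at least one block of zeros of length 5 and at least one block of zeros of length 1, and there exists an optimal alignment v of x and y with p₅(v) ≥ 31/32 − ε₁/2 and p₁(v) ≥ 1/4 − ε₁/2. Then P(L̃_n − L_n = 1 | X = x, Y = y) ≥ (1/4)·(31/32) − ε₁ and P(L̃_n − L_n = −1 | X = x, Y = y) ≤ 1/32 + ε₁. -/
/-!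
Write `L` for the optimal score. Removing a zero from `x` never increases `L`, and inserting one
increases it by at most one, so `L̃ - L ≤ 1` always (`optScore_modify_le`).

Fix an optimal alignment `v`. The pairs of ones enclosing a counted block cut `v` into independent
pieces, and `L` is superadditive under concatenation, so altering `x` inside such a gap changes `L`
by at least the change of the optimal score of the gap (`tail_step`). A gap with `a` zeros in `x`
and `b` zeros in `y` has optimal score `min a b` (`listOpt_replicate`). Hence

* shrinking a block of five zeros facing at most four zeros costs nothing, so `L̃ - L = -1` forces
  the chosen block of five to be outside `good5` (`le_optScore_modify`);
* doubling an isolated zero facing at least two zeros gains one, so `L̃ - L = 1` whenever both chosen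
  blocks are good (`optScore_modify_ge`).

Since `good5` and `good1` make up at least the fractions `p₅(v)` and `p₁(v)` of their blocks
(`N5lt_le`, `N1gt_le`), the two probabilities are at least `p₅ p₁` and at most `1 - p₅`.

Optimal scores are handled through the dynamic-programming recursion `listOpt` on lists, which
agrees with `optScore` by `optScore_eq`.
-/

open scoped Classical
open Finset

noncomputable section

/-- Score of aligning two letters (`true` = 1, `false` = 0):
`s(1,1) = S`, `s(0,0) = 1`, `s(1,0) = s(0,1) = 0`. -/
def letterScore (S : ℝ) (a b : Bool) : ℝ :=
  if a = true ∧ b = true then S else if a = false ∧ b = false then 1 else 0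

/-- Score of the alignment `(π, ν)` of the strings `x` and `y`. -/
def alignScore (S : ℝ) {n k : ℕ} (x y : Fin n → Bool) (π ν : Fin k → Fin n) : ℝ :=
  ∑ i : Fin k, letterScore S (x (π i)) (y (ν i))

/-- The optimal alignment score of two binary strings of length `n`. -/
def optScore (S : ℝ) (n : ℕ) (x y : Fin n → Bool) : ℝ :=
  sSup {r : ℝ | ∃ (k : ℕ) (π ν : Fin k → Fin n),
    StrictMono π ∧ StrictMono ν ∧ r = alignScore S x y π ν}

/-- The string `x`, extended by the (neutral) letter `true` outside `[0, n)`. -/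
def ext {n : ℕ} (x : Fin n → Bool) : ℕ → Bool :=
  fun j => if h : j < n then x ⟨j, h⟩ else true

/-- `blockStart x ℓ i` holds iff a block of zeros of length `ℓ` of `x` starts at position `i`:
positions `i, …, i+ℓ-1` carry zeros, and they are delimited by ones (or the ends of `x`). -/
def blockStart {n : ℕ} (x : Fin n → Bool) (ℓ i : ℕ) : Prop :=
  0 < ℓ ∧ i + ℓ ≤ n ∧ (∀ j ∈ Finset.Ico i (i + ℓ), ext x j = false) ∧
    (i = 0 ∨ ext x (i - 1) = true) ∧ ext x (i + ℓ) = true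

/-- The set of starting positions of blocks of zeros of length `ℓ` in `x`. -/
def starts {n : ℕ} (x : Fin n → Bool) (ℓ : ℕ) : Finset ℕ :=
  (Finset.range n).filter fun i => blockStart x ℓ i

/-- The number of blocks of zeros of length `ℓ` in `x`. -/
def numBlocks {n : ℕ} (x : Fin n → Bool) (ℓ : ℕ) : ℕ := (starts x ℓ).card

/-- Probability of an event under a uniform random binary string of length `n`. -/
def probX (n : ℕ) (E : (Fin n → Bool) → Prop) : ℝ :=
  ((Finset.univ.filter E).card : ℝ) / 2 ^ n

/-- Probability of an event under two independent uniform random binary strings of length `n`. -/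
def probXY (n : ℕ) (E : (Fin n → Bool) → (Fin n → Bool) → Prop) : ℝ :=
  ((Finset.univ.filter (fun p : (Fin n → Bool) × (Fin n → Bool) => E p.1 p.2)).card : ℝ) / 4 ^ n

/-- Expectation of a function of a uniform random binary string of length `n`. -/
def expX (n : ℕ) (f : (Fin n → Bool) → ℝ) : ℝ := (∑ x, f x) / 2 ^ n

/-- Expectation of a function of two independent uniform random binary strings of length `n`. -/
def expXY (n : ℕ) (f : (Fin n → Bool) → (Fin n → Bool) → ℝ) : ℝ := (∑ x, ∑ y, f x y) / 4 ^ n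

/-- The string obtained from `x` by removing one zero from the block of zeros starting at `p`
and inserting one extra zero into the block of zeros starting at `q`. -/
def modifyStr {n : ℕ} (x : Fin n → Bool) (p q : ℕ) : Fin n → Bool :=
  fun i => (((List.ofFn x).eraseIdx p).insertIdx (if p < q then q - 1 else q) false).getD i false

/-- `probDelta S n x y d` is the conditional probability, given `X = x` and `Y = y`, that
`L̃_n - L_n = d`, where `X̃` is obtained from `x` by choosing uniformly at random a block of
zeros of length 5 of `x` and removing one zero from it, and choosing uniformly at random a
block of zeros of length 1 of `x` and extending it by the removed zero (with the convention
`X̃ = x` when no block of zeros of length 5 or of length 1 exists). -/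
def probDelta (S : ℝ) (n : ℕ) (x y : Fin n → Bool) (d : ℝ) : ℝ :=
  if (starts x 5).Nonempty ∧ (starts x 1).Nonempty then
    ((((starts x 5) ×ˢ (starts x 1)).filter
        (fun pq => optScore S n (modifyStr x pq.1 pq.2) y - optScore S n x y = d)).card : ℝ)
      / (((starts x 5).card : ℝ) * ((starts x 1).card : ℝ))
  else if d = 0 then 1 else 0

/-- The number of ones of a binary string. -/
def numOnes {n : ℕ} (x : Fin n → Bool) : ℕ :=
  (Finset.univ.filter fun i => x i = true).card

/-- `(π, ν)` is an optimal alignment of `x` and `y`. -/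
def IsOptimal (S : ℝ) {n k : ℕ} (x y : Fin n → Bool) (π ν : Fin k → Fin n) : Prop :=
  StrictMono π ∧ StrictMono ν ∧ alignScore S x y π ν = optScore S n x y

/-- Index `i` of the alignment `(π, ν)` aligns a pair of ones of `x` and `y`. -/
def matchedPair {n k : ℕ} (x y : Fin n → Bool) (π ν : Fin k → Fin n) (i : Fin k) : Prop :=
  x (π i) = true ∧ y (ν i) = true

/-- The number of pairs of ones aligned by `(π, ν)`. -/
def numMatched {n k : ℕ} (x y : Fin n → Bool) (π ν : Fin k → Fin n) : ℕ :=
  (Finset.univ.filter (matchedPair x y π ν)).card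

/-- `N₅(v)`: the number of pairs of consecutive matched ones of `x` (with no skipped ones in
between, in either string) enclosing exactly a block of five zeros of `x`, such that only
zeros lie between the corresponding matched ones of `y`. -/
def N5count {n k : ℕ} (x y : Fin n → Bool) (π ν : Fin k → Fin n) : ℕ :=
  ((Finset.univ ×ˢ Finset.univ : Finset (Fin k × Fin k)).filter fun p =>
    p.1 < p.2 ∧ matchedPair x y π ν p.1 ∧ matchedPair x y π ν p.2 ∧
    (π p.2 : ℕ) = (π p.1 : ℕ) + 6 ∧
    (∀ j : Fin n, π p.1 < j → j < π p.2 → x j = false) ∧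
    (∀ j : Fin n, ν p.1 < j → j < ν p.2 → y j = false)).card

/-- `N₅<(v)`: as `N₅(v)`, additionally requiring that the corresponding matched ones of `y`
enclose strictly fewer than five zeros. -/
def N5ltCount {n k : ℕ} (x y : Fin n → Bool) (π ν : Fin k → Fin n) : ℕ :=
  ((Finset.univ ×ˢ Finset.univ : Finset (Fin k × Fin k)).filter fun p =>
    p.1 < p.2 ∧ matchedPair x y π ν p.1 ∧ matchedPair x y π ν p.2 ∧
    (π p.2 : ℕ) = (π p.1 : ℕ) + 6 ∧
    (∀ j : Fin n, π p.1 < j → j < π p.2 → x j = false) ∧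
    (∀ j : Fin n, ν p.1 < j → j < ν p.2 → y j = false) ∧
    (ν p.2 : ℕ) < (ν p.1 : ℕ) + 6).card

/-- `N₁(v)`: the number of pairs of consecutive matched ones of `x` (with no skipped ones in
between, in either string) enclosing exactly one zero of `x`, such that only zeros lie
between the corresponding matched ones of `y`. -/
def N1count {n k : ℕ} (x y : Fin n → Bool) (π ν : Fin k → Fin n) : ℕ :=
  ((Finset.univ ×ˢ Finset.univ : Finset (Fin k × Fin k)).filter fun p =>
    p.1 < p.2 ∧ matchedPair x y π ν p.1 ∧ matchedPair x y π ν p.2 ∧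
    (π p.2 : ℕ) = (π p.1 : ℕ) + 2 ∧
    (∀ j : Fin n, π p.1 < j → j < π p.2 → x j = false) ∧
    (∀ j : Fin n, ν p.1 < j → j < ν p.2 → y j = false)).card

/-- `N₁>(v)`: as `N₁(v)`, additionally requiring that the corresponding matched ones of `y`
enclose two or more zeros. -/
def N1gtCount {n k : ℕ} (x y : Fin n → Bool) (π ν : Fin k → Fin n) : ℕ :=
  ((Finset.univ ×ˢ Finset.univ : Finset (Fin k × Fin k)).filter fun p =>
    p.1 < p.2 ∧ matchedPair x y π ν p.1 ∧ matchedPair x y π ν p.2 ∧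
    (π p.2 : ℕ) = (π p.1 : ℕ) + 2 ∧
    (∀ j : Fin n, π p.1 < j → j < π p.2 → x j = false) ∧
    (∀ j : Fin n, ν p.1 < j → j < ν p.2 → y j = false) ∧
    (ν p.1 : ℕ) + 2 < (ν p.2 : ℕ)).card

/-! ### The optimal score of two lists -/

/-- The optimal alignment score of two lists, by dynamic programming on their heads. -/
def listOpt (S : ℝ) : List Bool → List Bool → ℝ
  | [], _ => 0
  | _ :: _, [] => 0
  | a :: A, b :: B =>
      max (listOpt S A B + letterScore S a b) (max (listOpt S (a :: A) B) (listOpt S A (b :: B)))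

/-- The letters `f a, …, f (a' - 1)`, as a list. -/
def seg (f : ℕ → Bool) (a a' : ℕ) : List Bool := (List.range' a (a' - a)).map f

lemma letterScore_false_le (S : ℝ) (b : Bool) : letterScore S false b ≤ 1 := by
  unfold letterScore; split_ifs <;> simp_all

lemma listOpt_nil_right (S : ℝ) (A : List Bool) : listOpt S A [] = 0 := by
  cases A <;> simp [listOpt]

lemma listOpt_nonneg (S : ℝ) (A B : List Bool) : 0 ≤ listOpt S A B := by
  fun_induction listOpt S A B with
  | case1 => exact le_rfl
  | case2 => exact le_rfl
  | case3 a A b B h1 h2 h3 => exact le_max_of_le_right (le_max_of_le_left h2)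

lemma listOpt_le_cons_left (S : ℝ) (a : Bool) (A B : List Bool) :
    listOpt S A B ≤ listOpt S (a :: A) B := by
  cases B with
  | nil => simp [listOpt_nil_right]
  | cons b B => rw [listOpt]; exact le_max_of_le_right (le_max_right _ _)

lemma listOpt_le_cons_right (S : ℝ) (b : Bool) (A B : List Bool) :
    listOpt S A B ≤ listOpt S A (b :: B) := by
  cases A with
  | nil => simp [listOpt]
  | cons a A => rw [listOpt]; exact le_max_of_le_right (le_max_left _ _)

lemma listOpt_pair_le (S : ℝ) (a b : Bool) (A B : List Bool) :
    listOpt S A B + letterScore S a b ≤ listOpt S (a :: A) (b :: B) := by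
  rw [listOpt]; exact le_max_left _ _

/-- Superadditivity: alignments of consecutive pieces can be concatenated. -/
lemma listOpt_append (S : ℝ) (A B A' B' : List Bool) :
    listOpt S A B + listOpt S A' B' ≤ listOpt S (A ++ A') (B ++ B') := by
  fun_induction listOpt S A B with
  | case1 B =>
    induction B with
    | nil => simp
    | cons b B ih => exact ih.trans (listOpt_le_cons_right S _ _ _)
  | case2 a A =>
    generalize a :: A = C
    induction C with
    | nil => simp
    | cons b B ih => exact ih.trans (listOpt_le_cons_left S _ _ _)
  | case3 a A b B h1 h2 h3 =>
    rw [← max_add_add_right, ← max_add_add_right]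
    refine max_le ?_ (max_le ?_ ?_)
    · have := listOpt_pair_le S a b (A ++ A') (B ++ B')
      simp only [List.cons_append] at *
      linarith
    · exact h2.trans (listOpt_le_cons_right S _ _ _)
    · exact h3.trans (listOpt_le_cons_left S _ _ _)

lemma listOpt_le_insert (S : ℝ) (a : Bool) (X R B : List Bool) :
    listOpt S (X ++ R) B ≤ listOpt S (X ++ a :: R) B := by
  induction X generalizing B with
  | nil => exact listOpt_le_cons_left S _ _ _
  | cons c X ih =>
    induction B with
    | nil => simp [listOpt_nil_right]
    | cons b B ihB =>
      simp only [List.cons_append] at *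
      rw [listOpt, listOpt]
      exact max_le_max (add_le_add (ih B) le_rfl) (max_le_max ihB (ih _))

lemma listOpt_insert_le (S : ℝ) (X R B : List Bool) :
    listOpt S (X ++ false :: R) B ≤ listOpt S (X ++ R) B + 1 := by
  induction X generalizing B with
  | nil =>
    simp only [List.nil_append]
    induction B with
    | nil => simp [listOpt_nil_right]
    | cons b B ihB =>
      rw [listOpt]
      have h1 := listOpt_le_cons_right S b R B
      have h2 := letterScore_false_le S b
      refine max_le ?_ (max_le ?_ ?_) <;> linarith
  | cons c X ih =>
    induction B with
    | nil => simp [listOpt_nil_right]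
    | cons b B ihB =>
      simp only [List.cons_append] at *
      rw [listOpt, listOpt, ← max_add_add_right, ← max_add_add_right]
      refine max_le_max ?_ (max_le_max ihB (ih _))
      have := ih B
      linarith

lemma listOpt_replicate (S : ℝ) (a b : ℕ) :
    listOpt S (List.replicate a false) (List.replicate b false) = min (a : ℝ) b := by
  induction a generalizing b with
  | zero => simp [listOpt]
  | succ a ih =>
    induction b with
    | zero =>
      rw [List.replicate_zero, listOpt_nil_right, Nat.cast_zero, min_eq_right (by positivity)]
    | succ b ihb =>
      have e := ih (b + 1)
      rw [List.replicate_succ] at *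
      rw [List.replicate_succ (n := b)] at *
      rw [listOpt, ih, ihb, e]
      simp only [letterScore]
      push_cast
      simp only [and_self, if_true, if_false]
      rw [← min_add_add_right]
      refine max_eq_left (max_le (le_min ?_ ?_) (le_min ?_ ?_))
      · linarith [min_le_left ((a : ℝ) + 1) b]
      · linarith [min_le_right ((a : ℝ) + 1) b]
      · linarith [min_le_left (a : ℝ) (b + 1)]
      · linarith [min_le_right (a : ℝ) (b + 1)]

/-! ### Segments of a string -/

lemma seg_succ (f : ℕ → Bool) {a a' : ℕ} (h : a < a') : seg f a a' = f a :: seg f (a + 1) a' := by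
  unfold seg
  obtain ⟨m, rfl⟩ : ∃ m, a' = a + 1 + m := ⟨a' - a - 1, by omega⟩
  rw [show a + 1 + m - a = m + 1 by omega, show a + 1 + m - (a + 1) = m by omega,
    List.range'_succ, List.map_cons]

lemma seg_append (f : ℕ → Bool) {a b c : ℕ} (h : a ≤ b) (h' : b ≤ c) :
    seg f a b ++ seg f b c = seg f a c := by
  obtain ⟨m, rfl⟩ := Nat.exists_eq_add_of_le h
  obtain ⟨l, rfl⟩ := Nat.exists_eq_add_of_le h'
  unfold seg
  rw [← List.map_append, show a + m - a = m by omega, show a + m + l - (a + m) = l by omega,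
    show a + m + l - a = m + l by omega, List.range'_append_1]

lemma seg_length (f : ℕ → Bool) (a b : ℕ) : (seg f a b).length = b - a := by simp [seg]

lemma seg_eq_replicate (f : ℕ → Bool) {a b : ℕ} (h : ∀ j, a ≤ j → j < b → f j = false) :
    seg f a b = List.replicate (b - a) false := by
  rw [List.eq_replicate_iff]
  refine ⟨seg_length _ _ _, ?_⟩
  intro c hc
  simp only [seg, List.mem_map, List.mem_range'_1] at hc
  obtain ⟨j, hj, rfl⟩ := hc
  exact h j hj.1 (by omega)

lemma ofFn_eq_seg {n : ℕ} (x : Fin n → Bool) : List.ofFn x = seg (ext x) 0 n := by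
  apply List.ext_getElem
  · simp [seg_length]
  · intro i h1 h2
    have : i < n := by simpa using h1
    simp [seg, _root_.ext, this]

/-! ### Alignments and the dynamic-programming value -/

/-- The part of an alignment inside a rectangle `[a, a') × [b, b')` scores at most the optimum
of the corresponding segments. -/
lemma sum_le_listOpt (S : ℝ) {k : ℕ} (f g : ℕ → Bool) (π ν : Fin k → ℕ)
    (hπ : StrictMono π) (hν : StrictMono ν) (a' b' : ℕ) :
    ∀ (N a b : ℕ) (I : Finset (Fin k)), (a' - a) + (b' - b) ≤ N →
      (∀ i ∈ I, a ≤ π i ∧ π i < a' ∧ b ≤ ν i ∧ ν i < b') →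
      ∑ i ∈ I, letterScore S (f (π i)) (g (ν i)) ≤ listOpt S (seg f a a') (seg g b b') := by
  intro N
  induction N with
  | zero =>
    intro a b I hN hI
    have : I = ∅ := by
      apply Finset.eq_empty_of_forall_notMem
      intro i hi
      have := hI i hi
      omega
    rw [this, Finset.sum_empty]
    exact listOpt_nonneg S _ _
  | succ N ih =>
    intro a b I hN hI
    rcases I.eq_empty_or_nonempty with rfl | ⟨i₀, hi₀⟩
    · rw [Finset.sum_empty]
      exact listOpt_nonneg S _ _
    have h0 := hI i₀ hi₀
    have ha : a < a' := by omega
    have hb : b < b' := by omega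
    by_cases h1 : ∃ i ∈ I, π i = a
    · obtain ⟨i, hi, hia⟩ := h1
      have hlt : ∀ j ∈ I, j ≠ i → i < j := by
        intro j hj hne
        have := hI j hj
        rcases lt_or_gt_of_ne hne with h | h
        · have := hπ h
          omega
        · exact h
      by_cases h2 : ν i = b
      · rw [seg_succ f ha, seg_succ g hb]
        refine le_trans ?_ (listOpt_pair_le _ _ _ _ _)
        rw [← Finset.sum_erase_add _ _ hi, hia, h2]
        refine add_le_add ?_ le_rfl
        apply ih (a + 1) (b + 1) (I.erase i) (by omega)
        intro j hj
        have hj' := Finset.mem_erase.mp hj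
        have := hI j hj'.2
        have h4 := hlt j hj'.2 hj'.1
        have h5 := hπ h4
        have h6 := hν h4
        omega
      · rw [seg_succ g hb]
        refine le_trans ?_ (listOpt_le_cons_right S _ _ _)
        apply ih a (b + 1) I (by omega)
        intro j hj
        have := hI j hj
        have h4 := hI i hi
        by_cases hne : j = i
        · subst hne; omega
        · have := hν (hlt j hj hne)
          omega
    · push Not at h1
      rw [seg_succ f ha]
      refine le_trans ?_ (listOpt_le_cons_left S _ _ _)
      apply ih (a + 1) b I (by omega)
      intro j hj
      have := hI j hj
      have := h1 j hj
      omega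

/-- The dynamic-programming value is the score of some alignment. -/
lemma exists_align (S : ℝ) (A B : List Bool) :
    ∃ (k : ℕ) (π : Fin k → Fin A.length) (ν : Fin k → Fin B.length),
      StrictMono π ∧ StrictMono ν ∧
        ∑ i, letterScore S (A.get (π i)) (B.get (ν i)) = listOpt S A B := by
  fun_induction listOpt S A B with
  | case1 B => exact ⟨0, Fin.elim0, Fin.elim0, fun i => i.elim0, fun i => i.elim0, by simp⟩
  | case2 a A => exact ⟨0, Fin.elim0, Fin.elim0, fun i => i.elim0, fun i => i.elim0, by simp⟩
  | case3 a A b B h1 h2 h3 =>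
    have hsucc : ∀ m, StrictMono (Fin.succ : Fin m → Fin (m + 1)) := fun m => Fin.strictMono_succ
    rcases max_choice (listOpt S A B + letterScore S a b)
      (max (listOpt S (a :: A) B) (listOpt S A (b :: B))) with h | h
    · rw [h]
      obtain ⟨k, π, ν, hπ, hν, e⟩ := h1
      refine ⟨k + 1, Fin.cons ⟨0, by simp⟩ (fun i => (π i).succ),
        Fin.cons ⟨0, by simp⟩ (fun i => (ν i).succ), ?_, ?_, ?_⟩
      · exact Fin.strictMono_cons.2 ⟨fun i => Fin.succ_pos _, (hsucc _).comp hπ⟩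
      · exact Fin.strictMono_cons.2 ⟨fun i => Fin.succ_pos _, (hsucc _).comp hν⟩
      · rw [Fin.sum_univ_succ, ← e]
        simp [add_comm]
    · rw [h]
      rcases max_choice (listOpt S (a :: A) B) (listOpt S A (b :: B)) with h | h
      · rw [h]
        obtain ⟨k, π, ν, hπ, hν, e⟩ := h2
        exact ⟨k, π, fun i => (ν i).succ, hπ, (hsucc _).comp hν, by rw [← e]; simp⟩
      · rw [h]
        obtain ⟨k, π, ν, hπ, hν, e⟩ := h3
        exact ⟨k, fun i => (π i).succ, ν, (hsucc _).comp hπ, hν, by rw [← e]; simp⟩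

lemma ext_val {n : ℕ} (x : Fin n → Bool) (i : Fin n) : _root_.ext x i = x i := by
  simp [_root_.ext]

lemma optScore_eq (S : ℝ) {n : ℕ} (x y : Fin n → Bool) :
    optScore S n x y = listOpt S (List.ofFn x) (List.ofFn y) := by
  apply IsGreatest.csSup_eq
  constructor
  · obtain ⟨k, π, ν, hπ, hν, e⟩ := exists_align S (List.ofFn x) (List.ofFn y)
    refine ⟨k, fun i => (π i).cast List.length_ofFn, fun i => (ν i).cast List.length_ofFn,
      fun i j h => hπ h, fun i j h => hν h, ?_⟩
    rw [← e, alignScore]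
    simp only [List.get_ofFn]
  · rintro r ⟨k, π, ν, hπ, hν, rfl⟩
    have := sum_le_listOpt S (_root_.ext x) (_root_.ext y) (fun i => (π i : ℕ)) (fun i => (ν i : ℕ))
      (fun i j h => hπ h) (fun i j h => hν h) n n _ 0 0 Finset.univ le_rfl (by simp)
    simp only [ext_val, ← ofFn_eq_seg] at this
    exact this

/-! ### Erasing and inserting a letter -/

lemma ofFn_modifyStr {n : ℕ} (x : Fin n → Bool) {p q : ℕ} (hp : p < n) (hq : q < n) :
    List.ofFn (modifyStr x p q) =
      ((List.ofFn x).eraseIdx p).insertIdx (if p < q then q - 1 else q) false := by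
  have hl : (((List.ofFn x).eraseIdx p).insertIdx
      (if p < q then q - 1 else q) false).length = n := by
    rw [List.length_insertIdx_of_le_length, List.length_eraseIdx_of_lt]
    · simp; omega
    · simpa using hp
    · rw [List.length_eraseIdx_of_lt (by simpa using hp)]
      simp only [List.length_ofFn]
      split_ifs <;> omega
  apply List.ext_getElem
  · rw [hl]; simp
  · intro i h1 h2
    simp only [List.getElem_ofFn, modifyStr]
    rw [List.getD_eq_getElem _ _ h2]

lemma insertIdx_append_length (X R : List Bool) (a : Bool) {m : ℕ} (hm : m = X.length) :
    (X ++ R).insertIdx m a = X ++ a :: R := by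
  subst hm
  induction X with
  | nil => simp
  | cons c X ih => simpa using ih

lemma eraseIdx_append_length (X R : List Bool) (a : Bool) {m : ℕ} (hm : m = X.length) :
    (X ++ a :: R).eraseIdx m = X ++ R := by
  subst hm
  induction X with
  | nil => simp
  | cons c X ih => simpa using ih

lemma listOpt_eraseIdx_le (S : ℝ) (A B : List Bool) (p : ℕ) :
    listOpt S (A.eraseIdx p) B ≤ listOpt S A B := by
  by_cases hp : p < A.length
  · have := listOpt_le_insert S A[p] (A.take p) (A.drop (p + 1)) B
    rwa [List.getElem_cons_drop, List.take_append_drop, ← List.eraseIdx_eq_take_drop_succ] at this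
  · rw [List.eraseIdx_of_length_le (by omega)]

lemma listOpt_insertIdx (S : ℝ) (A B : List Bool) {m : ℕ} (hm : m ≤ A.length) :
    listOpt S A B ≤ listOpt S (A.insertIdx m false) B ∧
      listOpt S (A.insertIdx m false) B ≤ listOpt S A B + 1 := by
  have h1 := listOpt_le_insert S false (A.take m) (A.drop m) B
  have h2 := listOpt_insert_le S (A.take m) (A.drop m) B
  rw [← insertIdx_append_length (A.take m) _ _ (m := m) (by simp [hm]),
    List.take_append_drop] at h1 h2
  exact ⟨h1, h2⟩

/-! ### Local changes along an optimal alignment -/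

section Alignment

variable {S : ℝ} {n k : ℕ} {x y : Fin n → Bool} {π ν : Fin k → Fin n}

/-- Score collected by the pairs with index at least `m`. -/
def tailScore (S : ℝ) {n k : ℕ} (x y : Fin n → Bool) (π ν : Fin k → Fin n) (m : ℕ) : ℝ :=
  ∑ l ∈ univ.filter (fun l : Fin k => m ≤ (l : ℕ)), letterScore S (x (π l)) (y (ν l))

lemma rect_bound (hπ : StrictMono π) (hν : StrictMono ν) (a a' b b' : ℕ) (I : Finset (Fin k))
    (hI : ∀ i ∈ I, a ≤ π i ∧ (π i : ℕ) < a' ∧ b ≤ ν i ∧ (ν i : ℕ) < b') :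
    ∑ l ∈ I, letterScore S (x (π l)) (y (ν l)) ≤
      listOpt S (seg (_root_.ext x) a a') (seg (_root_.ext y) b b') := by
  have key := sum_le_listOpt S (_root_.ext x) (_root_.ext y) (fun i => (π i : ℕ))
    (fun i => (ν i : ℕ)) (fun i j h => hπ h) (fun i j h => hν h) a' b' _ a b I le_rfl hI
  simpa only [ext_val] using key

lemma tail_base (hπ : StrictMono π) (hν : StrictMono ν) (j : Fin k) :
    tailScore S x y π ν j + 0 ≤
      listOpt S (seg (_root_.ext x) (π j) n) (seg (_root_.ext y) (ν j) n) := by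
  rw [add_zero]
  apply rect_bound hπ hν
  intro l hl
  have hl : j ≤ l := (mem_filter.mp hl).2
  exact ⟨hπ.monotone hl, (π l).2, hν.monotone hl, (ν l).2⟩

/-- Cutting an alignment around the gap between the pairs `i < j`. If a list `Z` beats the part of
the alignment from `j` on by `c`, and `X'` beats the letters of `x` in the gap by `d`, then putting
them together behind the unchanged letters of `x` up to the pair `i` gains `c + d`. -/
lemma tail_step (hπ : StrictMono π) (hν : StrictMono ν) {i j : Fin k} (hij : i < j)
    {m a b : ℕ} (hm : m ≤ i) (hb : b ≤ ν i)
    (hab : ∀ l : Fin k, m ≤ l → a ≤ π l ∧ b ≤ ν l)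
    {X' Z : List Bool} {c d : ℝ}
    (h : listOpt S (seg (_root_.ext x) (π i + 1) (π j)) (seg (_root_.ext y) (ν i + 1) (ν j)) + d
      ≤ listOpt S X' (seg (_root_.ext y) (ν i + 1) (ν j)))
    (hZ : tailScore S x y π ν j + c ≤ listOpt S Z (seg (_root_.ext y) (ν j) n)) :
    tailScore S x y π ν m + (c + d) ≤
      listOpt S (seg (_root_.ext x) a (π i + 1) ++ (X' ++ Z)) (seg (_root_.ext y) b n) := by
  have k1 := rect_bound (S := S) (x := x) (y := y) hπ hν a (π i + 1) b (ν i + 1)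
    (univ.filter fun l : Fin k => m ≤ l ∧ l ≤ i) (by
    intro l hl
    have hl := (mem_filter.mp hl).2
    have h1 : (π l : ℕ) ≤ π i := hπ.monotone hl.2
    have h2 : (ν l : ℕ) ≤ ν i := hν.monotone hl.2
    have h3 := hab l hl.1
    omega)
  have k2 := rect_bound (S := S) (x := x) (y := y) hπ hν (π i + 1) (π j) (ν i + 1) (ν j)
    (univ.filter fun l => i < l ∧ l < j) (by
    intro l hl
    have hl := (mem_filter.mp hl).2
    exact ⟨hπ hl.1, hπ hl.2, hν hl.1, hν hl.2⟩)
  have hsum : tailScore S x y π ν m =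
      ∑ l ∈ univ.filter (fun l : Fin k => m ≤ l ∧ l ≤ i), letterScore S (x (π l)) (y (ν l))
      + ∑ l with i < l ∧ l < j, letterScore S (x (π l)) (y (ν l))
      + tailScore S x y π ν j := by
    rw [tailScore, tailScore, sum_filter, sum_filter, sum_filter, sum_filter, ← sum_add_distrib,
      ← sum_add_distrib]
    refine sum_congr rfl fun l _ => ?_
    split_ifs <;> first | (exfalso; omega) | simp
  have hy : seg (_root_.ext y) b n = seg (_root_.ext y) b (ν i + 1) ++
      (seg (_root_.ext y) (ν i + 1) (ν j) ++ seg (_root_.ext y) (ν j) n) := by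
    have : (ν i : ℕ) < ν j := hν hij
    rw [seg_append _ (by omega) (by omega), seg_append _ (by omega) (by omega)]
  rw [hsum, hy]
  have a1 := listOpt_append S (seg (_root_.ext x) a (π i + 1)) (seg (_root_.ext y) b (ν i + 1))
    (X' ++ Z) (seg (_root_.ext y) (ν i + 1) (ν j) ++ seg (_root_.ext y) (ν j) n)
  have a2 := listOpt_append S X' (seg (_root_.ext y) (ν i + 1) (ν j)) Z
    (seg (_root_.ext y) (ν j) n)
  linarith

lemma tailScore_zero (hopt : IsOptimal S x y π ν) :
    tailScore S x y π ν 0 = optScore S n x y := by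
  rw [← hopt.2.2]
  simp [tailScore, alignScore]

/-- Position `p` of `x` opens a run of exactly `ℓ` zeros enclosed by the matched ones with
indices `i` and `j`, and between their partners in `y` there are only zeros. -/
def Gap {n k : ℕ} (x y : Fin n → Bool) (π ν : Fin k → Fin n) (ℓ p : ℕ) (i j : Fin k) : Prop :=
  i < j ∧ matchedPair x y π ν i ∧ matchedPair x y π ν j ∧ (π i : ℕ) + 1 = p ∧
    (π j : ℕ) = p + ℓ ∧ (∀ t : Fin n, π i < t → t < π j → x t = false) ∧
    (∀ t : Fin n, ν i < t → t < ν j → y t = false)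

lemma Gap.seg_x {ℓ p : ℕ} {i j : Fin k} (h : Gap x y π ν ℓ p i j) :
    seg (_root_.ext x) (π i + 1) (π j) = List.replicate ℓ false := by
  obtain ⟨_, _, _, h1, h2, h3, _⟩ := h
  rw [seg_eq_replicate, show (π j : ℕ) - (π i + 1) = ℓ by omega]
  intro t ht1 ht2
  have := (π j).2
  have := h3 ⟨t, by omega⟩ ht1 ht2
  rwa [← ext_val x] at this

lemma Gap.seg_y {ℓ p : ℕ} {i j : Fin k} (h : Gap x y π ν ℓ p i j) :
    seg (_root_.ext y) (ν i + 1) (ν j) = List.replicate (ν j - (ν i + 1)) false := by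
  obtain ⟨_, _, _, h1, h2, _, h3⟩ := h
  apply seg_eq_replicate
  intro t ht1 ht2
  have := (ν j).2
  have := h3 ⟨t, by omega⟩ ht1 ht2
  rwa [← ext_val y] at this

/-- With fewer than five zeros opposite it, a block of five zeros can lose one for free. -/
lemma Gap.shrink {p : ℕ} {i j : Fin k} (h : Gap x y π ν 5 p i j) (hy : (ν j : ℕ) < ν i + 6) :
    listOpt S (seg (_root_.ext x) (π i + 1) (π j)) (seg (_root_.ext y) (ν i + 1) (ν j)) + 0 ≤
      listOpt S (List.replicate 4 false) (seg (_root_.ext y) (ν i + 1) (ν j)) := by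
  rw [h.seg_x, h.seg_y, listOpt_replicate, listOpt_replicate]
  have : ((ν j - (ν i + 1) : ℕ) : ℝ) ≤ (4 : ℕ) := by
    exact_mod_cast (by omega : (ν j - (ν i + 1) : ℕ) ≤ 4)
  rw [min_eq_right this, add_zero]
  exact min_le_right _ _

/-- With at least two zeros opposite it, an isolated zero gains a point when doubled. -/
lemma Gap.grow {p : ℕ} {i j : Fin k} (h : Gap x y π ν 1 p i j) (hy : (ν i : ℕ) + 2 < ν j) :
    listOpt S (seg (_root_.ext x) (π i + 1) (π j)) (seg (_root_.ext y) (ν i + 1) (ν j)) + 1 ≤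
      listOpt S (List.replicate 2 false) (seg (_root_.ext y) (ν i + 1) (ν j)) := by
  rw [h.seg_x, h.seg_y, listOpt_replicate, listOpt_replicate]
  have : ((2 : ℕ) : ℝ) ≤ ((ν j - (ν i + 1) : ℕ) : ℝ) := by
    exact_mod_cast (by omega : 2 ≤ (ν j - (ν i + 1) : ℕ))
  rw [min_eq_left this]
  have := min_le_left ((1 : ℕ) : ℝ) ((ν j - (ν i + 1) : ℕ) : ℝ)
  push_cast at *
  linarith

/-- Starting positions of the blocks of five zeros of `x` facing fewer than five zeros of `y`. -/
def good5 {n k : ℕ} (x y : Fin n → Bool) (π ν : Fin k → Fin n) : Finset ℕ :=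
  (starts x 5).filter fun p => ∃ i j, Gap x y π ν 5 p i j ∧ (ν j : ℕ) < ν i + 6

/-- Positions of the isolated zeros of `x` facing at least two zeros of `y`. -/
def good1 {n k : ℕ} (x y : Fin n → Bool) (π ν : Fin k → Fin n) : Finset ℕ :=
  (starts x 1).filter fun q => ∃ i j, Gap x y π ν 1 q i j ∧ (ν i : ℕ) + 2 < ν j

lemma Gap.mem_starts {ℓ p : ℕ} (hℓ : 0 < ℓ) {i j : Fin k} (h : Gap x y π ν ℓ p i j) :
    p ∈ starts x ℓ := by
  obtain ⟨h0, m1, m2, h1, h2, h3, h4⟩ := h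
  have hj := (π j).2
  simp only [starts, mem_filter, mem_range, blockStart, mem_Ico]
  refine ⟨by omega, hℓ, by omega, ?_, Or.inr ?_, ?_⟩
  · intro t ht
    have := h3 ⟨t, by omega⟩ (Fin.lt_def.2 (by simp; omega)) (Fin.lt_def.2 (by simp; omega))
    rwa [← ext_val x] at this
  · rw [← h1, Nat.add_sub_cancel, ext_val]
    exact m1.1
  · rw [← h2, ext_val]
    exact m2.1

lemma N5lt_le (hπ : StrictMono π) : N5ltCount x y π ν ≤ (good5 x y π ν).card := by
  refine card_le_card_of_injOn (fun c => (π c.1 : ℕ) + 1) ?_ ?_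
  · intro c hc
    obtain ⟨h1, h2, h3, h4, h5, h6, h7⟩ := (mem_filter.mp hc).2
    have hg : Gap x y π ν 5 (π c.1 + 1) c.1 c.2 := ⟨h1, h2, h3, rfl, by omega, h5, h6⟩
    exact mem_coe.2 (mem_filter.2 ⟨hg.mem_starts (by norm_num), c.1, c.2, hg, h7⟩)
  · intro c hc c' hc' e
    obtain ⟨-, -, -, h4, -⟩ := (mem_filter.mp hc).2
    obtain ⟨-, -, -, h4', -⟩ := (mem_filter.mp hc').2
    have e : (π c.1 : ℕ) + 1 = π c'.1 + 1 := e
    exact Prod.ext (hπ.injective (Fin.ext (by omega))) (hπ.injective (Fin.ext (by omega)))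

lemma N1gt_le (hπ : StrictMono π) : N1gtCount x y π ν ≤ (good1 x y π ν).card := by
  refine card_le_card_of_injOn (fun c => (π c.1 : ℕ) + 1) ?_ ?_
  · intro c hc
    obtain ⟨h1, h2, h3, h4, h5, h6, h7⟩ := (mem_filter.mp hc).2
    have hg : Gap x y π ν 1 (π c.1 + 1) c.1 c.2 := ⟨h1, h2, h3, rfl, by omega, h5, h6⟩
    exact mem_coe.2 (mem_filter.2 ⟨hg.mem_starts (by norm_num), c.1, c.2, hg, h7⟩)
  · intro c hc c' hc' e
    obtain ⟨-, -, -, h4, -⟩ := (mem_filter.mp hc).2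
    obtain ⟨-, -, -, h4', -⟩ := (mem_filter.mp hc').2
    have e : (π c.1 : ℕ) + 1 = π c'.1 + 1 := e
    exact Prod.ext (hπ.injective (Fin.ext (by omega))) (hπ.injective (Fin.ext (by omega)))

lemma Gap.split (hπ : StrictMono π) {ℓ p a : ℕ} {i j : Fin k} (h : Gap x y π ν ℓ p i j)
    (ha : a ≤ π i) : seg (_root_.ext x) a n = seg (_root_.ext x) a (π i + 1) ++
      (List.replicate ℓ false ++ seg (_root_.ext x) (π j) n) := by
  have : (π i : ℕ) < π j := hπ h.1
  rw [← h.seg_x, seg_append _ (by omega) (by omega), seg_append _ (by omega) (by omega)]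

/-- Erasing a letter never helps, and inserting a zero gains at most one. -/
lemma optScore_modify_le {p q : ℕ} (hp : p ∈ starts x 5) (hq : q ∈ starts x 1) :
    optScore S n (modifyStr x p q) y ≤ optScore S n x y + 1 := by
  have hp := mem_range.1 (mem_filter.1 hp).1
  have hq := mem_range.1 (mem_filter.1 hq).1
  rw [optScore_eq, optScore_eq, ofFn_modifyStr x hp hq]
  have h1 := listOpt_eraseIdx_le S (List.ofFn x) (List.ofFn y) p
  have h2 := (listOpt_insertIdx S ((List.ofFn x).eraseIdx p) (List.ofFn y)
    (m := if p < q then q - 1 else q) (by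
      rw [List.length_eraseIdx_of_lt (by simpa using hp), List.length_ofFn]
      split_ifs <;> omega)).2
  linarith

/-- Erasing a zero from a good block of five costs nothing, wherever it is reinserted. -/
lemma le_optScore_modify (hopt : IsOptimal S x y π ν) {p q : ℕ} (hp : p ∈ good5 x y π ν)
    (hq : q ∈ starts x 1) : optScore S n x y ≤ optScore S n (modifyStr x p q) y := by
  obtain ⟨hp, i, j, hg, hy⟩ := mem_filter.1 hp
  have hp := mem_range.1 (mem_filter.1 hp).1
  have hq := mem_range.1 (mem_filter.1 hq).1
  have hπ := hopt.1
  have hν := hopt.2.1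
  have h2 := (listOpt_insertIdx S ((List.ofFn x).eraseIdx p) (List.ofFn y)
    (m := if p < q then q - 1 else q) (by
      rw [List.length_eraseIdx_of_lt (by simpa using hp), List.length_ofFn]
      split_ifs <;> omega)).1
  rw [← ofFn_modifyStr x hp hq, ← optScore_eq] at h2
  refine le_trans ?_ h2
  have h3 := tail_step (S := S) (m := 0) (a := 0) (b := 0) hπ hν hg.1 (by omega) (by omega)
    (by simp) (hg.shrink hy) (tail_base hπ hν j)
  rw [tailScore_zero hopt, ← ofFn_eq_seg] at h3
  rw [ofFn_eq_seg x, hg.split hπ (Nat.zero_le _), List.replicate_succ, List.cons_append,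
    eraseIdx_append_length _ _ _ (by rw [seg_length]; have := hg.2.2.2.1; omega)]
  linarith

/-- Gaps do not overlap: one that opens earlier closes no later than the other one opens,
since the one opening the second gap cannot lie among the zeros of the first. -/
lemma Gap.le_of_lt (hπ : StrictMono π) {ℓ ℓ' p q : ℕ} {i j i' j' : Fin k}
    (h : Gap x y π ν ℓ p i j) (h' : Gap x y π ν ℓ' q i' j') (hpq : p < q) : j ≤ i' := by
  by_contra! hlt
  obtain ⟨_, _, _, h1, h2, h3, _⟩ := h
  obtain ⟨_, m, _, h1', h2', h3', _⟩ := h'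
  have := h3 (π i') (Fin.lt_def.2 (by omega)) (hπ hlt)
  rw [m.1] at this
  cases this

/-- Moving a zero from a good block of five to a good isolated zero gains one point. -/
lemma optScore_modify_ge (hopt : IsOptimal S x y π ν) {p q : ℕ} (hp : p ∈ good5 x y π ν)
    (hq : q ∈ good1 x y π ν) : optScore S n x y + 1 ≤ optScore S n (modifyStr x p q) y := by
  obtain ⟨hp, i, j, hg, hy⟩ := mem_filter.1 hp
  obtain ⟨hq, i', j', hg', hy'⟩ := mem_filter.1 hq
  have hp := mem_range.1 (mem_filter.1 hp).1
  have hq := mem_range.1 (mem_filter.1 hq).1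
  have hπ := hopt.1
  have hν := hopt.2.1
  have e1 := hg.2.2.2.1
  have e2 := hg.2.2.2.2.1
  have e1' := hg'.2.2.2.1
  have e2' := hg'.2.2.2.2.1
  rw [optScore_eq, optScore_eq S (modifyStr x p q), ofFn_modifyStr x hp hq, ← optScore_eq]
  rcases lt_trichotomy p q with hlt | rfl | hlt
  · have hji := hg.le_of_lt hπ hg' hlt
    have hji1 : (π j : ℕ) ≤ π i' := hπ.monotone hji
    have h3 := tail_step (S := S) (m := j) (a := π j) (b := ν j) hπ hν hg'.1 hji
      (hν.monotone hji) (fun l hl => ⟨hπ.monotone hl, hν.monotone hl⟩) (hg'.grow hy')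
      (tail_base hπ hν j')
    have h4 := tail_step (S := S) (m := 0) (a := 0) (b := 0) hπ hν hg.1 (by omega) (by omega)
      (by simp) (hg.shrink hy) h3
    rw [tailScore_zero hopt, ← ofFn_eq_seg] at h4
    rw [ofFn_eq_seg x, hg.split hπ (Nat.zero_le _), hg'.split hπ hji1, List.replicate_succ,
      List.cons_append, eraseIdx_append_length _ _ _ (by rw [seg_length]; omega), if_pos hlt,
      ← List.append_assoc, ← List.append_assoc,
      insertIdx_append_length _ _ _ (by simp [seg_length]; omega)]
    simp only [List.append_assoc, List.replicate_succ, List.replicate_zero, List.cons_append,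
      List.nil_append] at h4 ⊢
    linarith
  · -- both gaps would open at `p`, but the shorter one closes with a one inside the longer one
    have := hg.2.2.2.2.2.1 (π j') (Fin.lt_def.2 (by omega)) (Fin.lt_def.2 (by omega))
    rw [hg'.2.2.1.1] at this
    cases this
  · have hji := hg'.le_of_lt hπ hg hlt
    have hji1 : (π j' : ℕ) ≤ π i := hπ.monotone hji
    have h3 := tail_step (S := S) (m := j') (a := π j') (b := ν j') hπ hν hg.1 hji
      (hν.monotone hji) (fun l hl => ⟨hπ.monotone hl, hν.monotone hl⟩) (hg.shrink hy)
      (tail_base hπ hν j)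
    have h4 := tail_step (S := S) (m := 0) (a := 0) (b := 0) hπ hν hg'.1 (by omega) (by omega)
      (by simp) (hg'.grow hy') h3
    rw [tailScore_zero hopt, ← ofFn_eq_seg] at h4
    rw [ofFn_eq_seg x, hg'.split hπ (Nat.zero_le _), hg.split hπ hji1, if_neg hlt.not_gt,
      List.replicate_succ (n := 4), List.cons_append, ← List.append_assoc, ← List.append_assoc,
      eraseIdx_append_length _ _ _ (by simp [seg_length]; omega), List.append_assoc,
      List.append_assoc, insertIdx_append_length _ _ _ (by simp [seg_length]; omega)]
    simp only [List.replicate_succ, List.replicate_zero, List.cons_append,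
      List.nil_append] at h4 ⊢
    linarith

end Alignment

/-- let `ε₁ > 0` satisfy `35/64 + ε₁/4 < 1`.  If `x` contains at least one block
of zeros of length 5 and one of length 1, and some optimal alignment `v` of `x` and `y`
satisfies `p₅(v) ≥ 31/32 - ε₁/2` and `p₁(v) ≥ 1/4 - ε₁/2`, then
`P(L̃_n - L_n = 1 | X = x, Y = y) ≥ (1/4)(31/32) - ε₁` and
`P(L̃_n - L_n = -1 | X = x, Y = y) ≤ 1/32 + ε₁`. -/
theorem bias_from_p5_p1 (ε₁ S : ℝ) (hε₁ : 0 < ε₁) (hS : 0 < S)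
    (hcond : 35 / 64 + ε₁ / 4 < 1)
    (n : ℕ) (x y : Fin n → Bool)
    (h5 : (starts x 5).Nonempty) (h1 : (starts x 1).Nonempty)
    (k : ℕ) (π ν : Fin k → Fin n) (hopt : IsOptimal S x y π ν)
    (hp5 : 31 / 32 - ε₁ / 2 ≤ (N5ltCount x y π ν : ℝ) / (numBlocks x 5 : ℝ))
    (hp1 : 1 / 4 - ε₁ / 2 ≤ (N1gtCount x y π ν : ℝ) / (numBlocks x 1 : ℝ)) :
    (1 : ℝ) / 4 * (31 / 32) - ε₁ ≤ probDelta S n x y 1 ∧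
      probDelta S n x y (-1) ≤ 1 / 32 + ε₁ := by
  have hπ := hopt.1
  have c5 : (0 : ℝ) < (starts x 5).card := by exact_mod_cast h5.card_pos
  have c1 : (0 : ℝ) < (starts x 1).card := by exact_mod_cast h1.card_pos
  have g5 : (31 / 32 - ε₁ / 2) * (starts x 5).card ≤ ((good5 x y π ν).card : ℝ) := by
    rw [le_div_iff₀ (by exact c5)] at hp5
    exact hp5.trans (by exact_mod_cast N5lt_le hπ)
  have g1 : (1 / 4 - ε₁ / 2) * (starts x 1).card ≤ ((good1 x y π ν).card : ℝ) := by
    rw [le_div_iff₀ (by exact c1)] at hp1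
    exact hp1.trans (by exact_mod_cast N1gt_le hπ)
  unfold probDelta
  rw [if_pos ⟨h5, h1⟩, if_pos ⟨h5, h1⟩, le_div_iff₀ (by positivity), div_le_iff₀ (by positivity)]
  constructor
  · have hsub : good5 x y π ν ×ˢ good1 x y π ν ⊆ ((starts x 5) ×ˢ (starts x 1)).filter
        (fun pq => optScore S n (modifyStr x pq.1 pq.2) y - optScore S n x y = 1) := by
      rintro ⟨p, q⟩ h
      obtain ⟨hp, hq⟩ := mem_product.1 h
      have hp' := (mem_filter.1 hp).1
      have hq' := (mem_filter.1 hq).1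
      refine mem_filter.2 ⟨mem_product.2 ⟨hp', hq'⟩, ?_⟩
      have h2 := optScore_modify_le (S := S) (y := y) hp' hq'
      have h3 := optScore_modify_ge hopt hp hq
      change optScore S n (modifyStr x p q) y - optScore S n x y = 1
      linarith
    have hc := card_le_card hsub
    rw [card_product] at hc
    refine le_trans ?_ (Nat.cast_le.2 hc)
    push_cast
    rcases le_or_gt (1 / 4 - ε₁ / 2) 0 with hneg | hpos
    · -- here `ε₁ ≥ 1/2`, so the claimed lower bound is negative
      refine le_trans (mul_nonpos_of_nonpos_of_nonneg (by linarith) (by positivity))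
        (by positivity)
    · have h6 := mul_le_mul g5 g1 (by positivity) (by positivity)
      refine le_trans ?_ h6
      have h7 : (1 : ℝ) / 4 * (31 / 32) - ε₁ ≤ (31 / 32 - ε₁ / 2) * (1 / 4 - ε₁ / 2) := by
        nlinarith [sq_nonneg ε₁]
      have h8 := mul_le_mul_of_nonneg_right h7
        (by positivity : (0 : ℝ) ≤ (starts x 5).card * (starts x 1).card)
      linarith
  · have hsub : ((starts x 5) ×ˢ (starts x 1)).filter
        (fun pq => optScore S n (modifyStr x pq.1 pq.2) y - optScore S n x y = -1) ⊆
        (starts x 5 \ good5 x y π ν) ×ˢ starts x 1 := by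
      rintro ⟨p, q⟩ h
      obtain ⟨h, he⟩ := mem_filter.1 h
      obtain ⟨hp, hq⟩ := mem_product.1 h
      refine mem_product.2 ⟨mem_sdiff.2 ⟨hp, fun hgood => ?_⟩, hq⟩
      have h2 := le_optScore_modify hopt hgood hq
      change optScore S n (modifyStr x p q) y - optScore S n x y = -1 at he
      linarith
    have hc := card_le_card hsub
    rw [card_product] at hc
    have hd : ((starts x 5 \ good5 x y π ν).card : ℝ) =
        (starts x 5).card - (good5 x y π ν).card := by
      have hss : good5 x y π ν ⊆ starts x 5 := filter_subset _ _
      have := card_sdiff_add_card_eq_card hss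
      rw [← this, Nat.cast_add, add_sub_cancel_right]
    refine le_trans (Nat.cast_le.2 hc) ?_
    push_cast
    rw [hd, ← mul_assoc]
    refine mul_le_mul_of_nonneg_right ?_ c1.le
    nlinarith [mul_pos hε₁ c5]
end
end

section
/- For every ε₁ > 0 there exists ε₀ > 0 such that for every ε ∈ (0, ε₀) with S > 16/ε there is a constant γ_c > 0, independent of n, with P(Cⁿ) ≥ 1 − e^{−γ_c n} for all n, where Cⁿ is the event that every optimal alignment v ∈ V of X and Y satisfies N_{5<}(v)/N_5(v) ≥ 31/32 − ε₁/4. -/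
/-!
The proof is a union bound over all ways of cutting `x` and `y` at `m` marked ones each,
organised as a partition function. The marked ones split a prefix of `x` into segments
`u₀ 1 u₁ 1 ⋯ u_{m-1} 1` and a prefix of `y` into `w₀ 1 w₁ 1 ⋯ w_{m-1} 1`; a given cut occurs
with probability at most `∏ 2^{-|u_j|-1} 2^{-|w_j|-1}` (`card_isPre`). The optimality of the
alignment and the size of `S` play no role.

Write `δ = ε₁ / 4` and give the pair `(u, w)` the contribution
`F(u, w) = 1[|w| ≥ 5] - (1/32 + δ)` if `u = 00000` and `w` consists of zeros, and `F = 0`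
otherwise (`segF`). Cutting at the aligned pairs of ones of an alignment in `V` with
`N₅< ≤ (31/32 - δ) N₅` produces at most `ε m / 2` ones inside the segments and
`∑ F(u_j, w_j) ≥ -2`; the slack absorbs the first segment, which is not enclosed by two
aligned ones (`badCut_of_inV`). So for `0 < η < 1` and `l ≥ 0` the weight
`∏ η^{ones(u_j) + ones(w_j)} e^{l F(u_j, w_j)}` is at least `η^{ε m / 2} e^{-2 l}`, and the
probability that such a cut exists is at most `e^{2 l} η^{-ε m / 2} Q^m` (`card_badCut`), where
`Q = ∑_{u, w} 2^{-|u|-|w|-2} η^{ones(u) + ones(w)} e^{l F(u, w)}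
   = (1 - η)⁻² - (1 - avg δ l) / 64` (bounded in `tsum_seg`).
A zero block of `y` is shorter than `5` with probability `31/32`, so `avg δ l < 1` for
`l = δ / 2` (`avg_lt_one`); then `Q < 1` for small `η`, and `η^{-ε / 2} Q` stays below `1` for
all small `ε`. Summing over `n / 4 ≤ m ≤ n` gives an exponential bound (`card_bad_le`). For the
finitely many small `n ≥ 1` it suffices that the event has positive probability, since two
all-zero strings have no alignment in `V` (`exists_rate`).
-/

open scoped Classical
open Finset

noncomputable section

/-- The position in `x` of the last one of `x` matched by the alignment `(π, ν)`
(0 if there is none). -/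
def lastMatchedX {n k : ℕ} (x y : Fin n → Bool) (π ν : Fin k → Fin n) : ℕ :=
  (Finset.univ.filter (matchedPair x y π ν)).sup fun i => (π i : ℕ)

/-- The position in `y` of the last one of `y` matched by the alignment `(π, ν)`
(0 if there is none). -/
def lastMatchedY {n k : ℕ} (x y : Fin n → Bool) (π ν : Fin k → Fin n) : ℕ :=
  (Finset.univ.filter (matchedPair x y π ν)).sup fun i => (ν i : ℕ)

/-- The number of ones of `x`, counted up to the last aligned pair of ones, which do not
belong to an aligned pair of ones of `(π, ν)`. -/
def skippedOnesX {n k : ℕ} (x y : Fin n → Bool) (π ν : Fin k → Fin n) : ℕ :=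
  (Finset.univ.filter fun j : Fin n => x j = true ∧ (j : ℕ) ≤ lastMatchedX x y π ν ∧
    ∀ i : Fin k, matchedPair x y π ν i → π i ≠ j).card

/-- The number of ones of `y`, counted up to the last aligned pair of ones, which do not
belong to an aligned pair of ones of `(π, ν)`. -/
def skippedOnesY {n k : ℕ} (x y : Fin n → Bool) (π ν : Fin k → Fin n) : ℕ :=
  (Finset.univ.filter fun j : Fin n => y j = true ∧ (j : ℕ) ≤ lastMatchedY x y π ν ∧
    ∀ i : Fin k, matchedPair x y π ν i → ν i ≠ j).card

/-- The alignment `(π, ν)` (encoded by its skipped-ones tuple `v`) belongs to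
`V = ∪_{k ≥ (1/2 - ε/8)n} Vᵏ`: it aligns at least `(1/2 - ε/8)n` pairs of ones and the total
number of skipped ones is at most `ε/2` times the number of aligned pairs of ones. -/
def inV (ε : ℝ) {n k : ℕ} (x y : Fin n → Bool) (π ν : Fin k → Fin n) : Prop :=
  ((1 : ℝ) / 2 - ε / 8) * n ≤ (numMatched x y π ν : ℝ) ∧
  (skippedOnesX x y π ν + skippedOnesY x y π ν : ℝ) ≤ ε * (numMatched x y π ν : ℝ) / 2

namespace PfAux
open ENNReal

/-! ### Partition functions over segments -/

/-- The concatenation `s₀ 1 s₁ 1 ⋯ s_{m-1} 1`: the prefix of a string that is cut at `m`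
marked ones into the segments `s`. -/
def pre {m : ℕ} (s : Fin m → List Bool) : List Bool :=
  (List.ofFn fun j => s j ++ [true]).flatten

/-- The contribution of a pair of segments `(u, w)`: `1[|w| ≥ 5] - (1/32 + δ)` if `u` consists of
exactly five zeros and `w` of zeros only, and `0` otherwise. -/
def segF (δ : ℝ) (s : List Bool × List Bool) : ℝ :=
  if s.1 = List.replicate 5 false ∧ s.2 = List.replicate s.2.length false then
    (if s.2.length < 5 then 0 else 1) - (1 / 32 + δ) else 0

/-- The total probability weight `2^{-|u|-1}` of a segment followed by a one, discounted
by `η` for every skipped one. -/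
def segBase (η : ℝ) (u : List Bool) : ℝ≥0∞ :=
  ENNReal.ofReal ((1 / 2) ^ (u.length + 1) * η ^ (u.count true))

lemma tsum_pair {α β : Type*} (f : α × β → ℝ≥0∞) :
    ∑' p, f p = ∑' a, ∑' b, f (a, b) :=
  ENNReal.tsum_prod (f := fun a b => f (a, b))

lemma tsum_pi_prod {α : Type*} (f : α → ℝ≥0∞) (m : ℕ) :
    ∑' s : Fin m → α, ∏ j, f (s j) = (∑' a, f a) ^ m := by
  induction m with
  | zero => simp
  | succ m ih =>
    rw [← (Fin.consEquiv fun _ => α).tsum_eq, tsum_pair, pow_succ', ← ih,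
      ← ENNReal.tsum_mul_right]
    refine tsum_congr fun a => ?_
    rw [← ENNReal.tsum_mul_left]
    refine tsum_congr fun s => ?_
    simp [Fin.consEquiv, Fin.prod_univ_succ]

lemma tsum_list_prod {α : Type*} (f : α → ℝ≥0∞) :
    ∑' l : List α, (l.map f).prod = ∑' m : ℕ, (∑' a, f a) ^ m := by
  rw [← (List.equivSigmaTuple (α := α)).symm.tsum_eq, ENNReal.tsum_sigma']
  refine tsum_congr fun m => ?_
  rw [← tsum_pi_prod]
  refine tsum_congr fun s => ?_
  simp [List.equivSigmaTuple, List.map_ofFn, List.prod_ofFn]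

lemma segBase_eq (η : ℝ) (hη : 0 ≤ η) (u : List Bool) :
    segBase η u = ENNReal.ofReal (1 / 2) *
      (u.map fun b => ENNReal.ofReal (if b then η / 2 else 1 / 2)).prod := by
  unfold segBase
  induction u with
  | nil => simp
  | cons b u ih =>
    rw [List.map_cons, List.prod_cons, mul_left_comm, ← ih, ← ENNReal.ofReal_mul (by split_ifs <;> positivity)]
    congr 1
    cases b <;> simp [pow_succ] <;> ring

lemma tsum_segBase (η : ℝ) (hη : 0 ≤ η) (hη1 : η < 1) :
    ∑' u, segBase η u = ENNReal.ofReal (1 / (1 - η)) := by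
  simp_rw [segBase_eq η hη]
  rw [ENNReal.tsum_mul_left, tsum_list_prod, ENNReal.tsum_geometric, tsum_bool]
  rw [← ENNReal.ofReal_add (by simp) (by simp; positivity), ← ENNReal.ofReal_one,
    ← ENNReal.ofReal_sub _ (by simp; positivity), ← ENNReal.ofReal_inv_of_pos (by simp; linarith),
    ← ENNReal.ofReal_mul (by norm_num)]
  congr 1
  have : (1:ℝ) - η ≠ 0 := by linarith
  have : (1:ℝ) - (1/2 + η/2) ≠ 0 := by intro h; apply this; linarith
  simp only [if_true, Bool.false_eq_true, if_false]
  rw [show (1:ℝ) - (1 / 2 + η / 2) = (1 - η) / 2 by ring]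
  field_simp

/-- The average of `e^{λF}` over pairs of segments, conditioned on `u` being five zeros
and `w` consisting of zeros. -/
def avg (δ l : ℝ) : ℝ :=
  31 / 32 * Real.exp (-l * (1 / 32 + δ)) + 1 / 32 * Real.exp (l * (31 / 32 - δ))

lemma tsum_zeros (A B : ℝ) (hA : 0 ≤ A) (hB : 0 ≤ B) :
    ∑' h : ℕ, ENNReal.ofReal ((1 / 2) ^ (h + 1) * if h < 5 then B else A)
      = ENNReal.ofReal (31 / 32 * B + 1 / 32 * A) := by
  have h1 : HasSum (fun h : ℕ => (1 / 2 : ℝ) ^ (h + 1) * if h < 5 then B else A)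
      (31 / 32 * B + 1 / 32 * A) := by
    rw [← hasSum_nat_add_iff' 5]
    have := (hasSum_geometric_two.mul_right (A / 64))
    have e1 : (fun i : ℕ => (1 / 2 : ℝ) ^ (i + 5 + 1) * if i + 5 < 5 then B else A) =
        fun i => (1 / 2) ^ i * (A / 64) := by
      funext i
      simp only [show ¬ (i + 5 < 5) by omega, if_false]
      ring
    have e2 : (31 / 32 * B + 1 / 32 * A -
        ∑ i ∈ range 5, (1 / 2 : ℝ) ^ (i + 1) * if i < 5 then B else A) = 2 * (A / 64) := by
      norm_num [Finset.sum_range_succ]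
      ring
    rw [e1, e2]
    exact this
  rw [← h1.tsum_eq, ENNReal.ofReal_tsum_of_nonneg _ h1.summable]
  intro h; split_ifs <;> positivity

/-- The pairs of segments whose contribution `segF` is nontrivial, with an arbitrary factor
depending on the length of the second one. -/
lemma tsum_special (η A B : ℝ) (hA : 0 ≤ A) (hB : 0 ≤ B) :
    ∑' s : List Bool × List Bool,
      (if s.1 = List.replicate 5 false ∧ s.2 = List.replicate s.2.length false then
        segBase η s.1 * segBase η s.2 * ENNReal.ofReal (if s.2.length < 5 then B else A) else 0)
      = ENNReal.ofReal (1 / 64 * (31 / 32 * B + 1 / 32 * A)) := by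
  rw [tsum_pair, tsum_eq_single (List.replicate 5 false)]
  · have hinj : Function.Injective (fun h : ℕ => List.replicate h false) := by
      intro a b hab; simpa using congrArg List.length hab
    rw [← hinj.tsum_eq]
    · rw [ENNReal.ofReal_mul (by norm_num), ← tsum_zeros A B hA hB, ← ENNReal.tsum_mul_left]
      refine tsum_congr fun h => ?_
      simp only [List.length_replicate, and_self, if_true, segBase, List.count_replicate]
      rw [mul_assoc, ← ENNReal.ofReal_mul (by simp)]
      norm_num
    · intro w hw
      simp only [Function.mem_support, ne_eq, ite_eq_right_iff, Classical.not_imp] at hw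
      exact ⟨w.length, hw.1.2.symm⟩
  · intro u hu
    simp only [hu, false_and, if_false, tsum_zero]

lemma tsum_seg (η δ l : ℝ) (hη : 0 ≤ η) (hη1 : η ≤ 1 / 4) :
    ∑' s : List Bool × List Bool,
      segBase η s.1 * segBase η s.2 * ENNReal.ofReal (Real.exp (l * segF δ s))
      ≤ ENNReal.ofReal (1 + 4 * η - 1 / 64 * (1 - avg δ l)) := by
  set Q := ∑' s : List Bool × List Bool,
      segBase η s.1 * segBase η s.2 * ENNReal.ofReal (Real.exp (l * segF δ s)) with hQ
  have key : Q + ENNReal.ofReal (1 / 64) =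
      ENNReal.ofReal (1 / (1 - η)) * ENNReal.ofReal (1 / (1 - η)) +
        ENNReal.ofReal (1 / 64 * avg δ l) := by
    have e1 := tsum_special η 1 1 (by norm_num) (by norm_num)
    have e2 := tsum_special η (Real.exp (l * (31 / 32 - δ))) (Real.exp (-l * (1 / 32 + δ)))
      (Real.exp_nonneg _) (Real.exp_nonneg _)
    have e3 : ∑' s : List Bool × List Bool, segBase η s.1 * segBase η s.2 =
        ENNReal.ofReal (1 / (1 - η)) * ENNReal.ofReal (1 / (1 - η)) := by
      rw [← tsum_segBase η hη (by linarith), tsum_pair, ← ENNReal.tsum_mul_right]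
      simp_rw [ENNReal.tsum_mul_left]
    unfold avg
    rw [← e2, ← e3, show (1 / 64 : ℝ) = 1 / 64 * (31 / 32 * 1 + 1 / 32 * 1) by norm_num, ← e1,
      hQ, ← ENNReal.tsum_add, ← ENNReal.tsum_add]
    refine tsum_congr fun s => ?_
    unfold segF
    by_cases h : s.1 = List.replicate 5 false ∧ s.2 = List.replicate s.2.length false
    · simp only [if_pos h, ite_self, ENNReal.ofReal_one, mul_one]
      rw [add_comm]
      congr 3
      split_ifs <;> congr 1 <;> ring
    · simp only [if_neg h, mul_zero, Real.exp_zero, ENNReal.ofReal_one, mul_one]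
  have h0 : (0:ℝ) < 1 - η := by linarith
  have ha : 0 ≤ avg δ l := by unfold avg; positivity
  rw [← ENNReal.ofReal_mul (by positivity), ← ENNReal.ofReal_add (by positivity) (by positivity)] at key
  have hle : 1 / (1 - η) * (1 / (1 - η)) ≤ 1 + 4 * η := by
    rw [div_mul_div_comm, div_le_iff₀ (by positivity)]
    nlinarith [mul_nonneg hη hη, mul_nonneg hη (by linarith : 0 ≤ 1 / 4 - η), mul_nonneg (mul_nonneg hη hη) hη]
  have h2 : Q = ENNReal.ofReal (1 / (1 - η) * (1 / (1 - η)) + 1 / 64 * avg δ l) -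
      ENNReal.ofReal (1 / 64) := by
    rw [← key, ENNReal.add_sub_cancel_right ENNReal.ofReal_ne_top]
  rw [h2, ← ENNReal.ofReal_sub _ (by norm_num)]
  apply ENNReal.ofReal_le_ofReal
  linarith

lemma avg_lt_one (δ : ℝ) (h0 : 0 < δ) (h1 : δ < 31 / 32) : avg δ (δ / 2) < 1 := by
  have b1 := Real.abs_exp_sub_one_sub_id_le (x := -(δ / 2) * (1 / 32 + δ))
    (by rw [abs_le]; constructor <;> nlinarith)
  have b2 := Real.abs_exp_sub_one_sub_id_le (x := (δ / 2) * (31 / 32 - δ))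
    (by rw [abs_le]; constructor <;> nlinarith)
  rw [abs_le] at b1 b2
  unfold avg
  have c1 : (-(δ / 2) * (1 / 32 + δ)) ^ 2 ≤ (δ / 2) ^ 2 := by
    rw [mul_pow, neg_sq]
    exact mul_le_of_le_one_right (sq_nonneg _) (by nlinarith)
  have c2 : ((δ / 2) * (31 / 32 - δ)) ^ 2 ≤ (δ / 2) ^ 2 := by
    rw [mul_pow]
    exact mul_le_of_le_one_right (sq_nonneg _) (by nlinarith)
  nlinarith [b1.2, b2.2]

/-! ### The union bound -/

/-- `u` is a prefix of the string `x`. -/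
def IsPre {n : ℕ} (u : List Bool) (x : Fin n → Bool) : Prop :=
  ∀ i (h : i < u.length), ∃ h' : i < n, x ⟨i, h'⟩ = u[i]

lemma card_isPre (n : ℕ) (u : List Bool) :
    (univ.filter fun x : Fin n → Bool => IsPre u x).card * 2 ^ u.length ≤ 2 ^ n := by
  by_cases hu : u.length ≤ n
  · -- Overwriting the prefix `u` by an arbitrary one is injective.
    have : ((univ.filter fun x : Fin n → Bool => IsPre u x) ×ˢ
        (univ : Finset (Fin u.length → Bool))).card ≤ (univ : Finset (Fin n → Bool)).card := by
      refine Finset.card_le_card_of_injOn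
        (fun p i => if h : (i : ℕ) < u.length then p.2 ⟨i, h⟩ else p.1 i)
        (fun _ _ => Finset.mem_coe.2 (Finset.mem_univ _)) ?_
      rintro ⟨x, f⟩ hx ⟨x', f'⟩ hx' heq
      simp only [coe_product, coe_filter, Finset.mem_univ, true_and, coe_univ, Set.mem_prod,
        Set.mem_ofPred_eq, Set.mem_univ, and_true] at hx hx'
      ext i
      · by_cases h : (i : ℕ) < u.length
        · obtain ⟨_, h1⟩ := hx i h
          obtain ⟨_, h2⟩ := hx' i h
          simp only [Fin.eta] at h1 h2
          simp [h1, h2]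
        · have := congrFun heq i
          simp only [h, dite_false] at this
          simp [this]
      · have := congrFun heq ⟨i, i.2.trans_le hu⟩
        simp only [i.2, dite_true, Fin.eta] at this
        simp [this]
    simpa using this
  · rw [Finset.card_eq_zero.2]
    · simp
    · refine Finset.filter_eq_empty_iff.2 fun x _ hx => ?_
      obtain ⟨h, _⟩ := hx n (by omega)
      exact lt_irrefl _ h

lemma length_pre {m : ℕ} (s : Fin m → List Bool) : (pre s).length = ∑ j, ((s j).length + 1) := by
  simp [pre, List.length_flatten, List.sum_ofFn, List.map_ofFn, Function.comp_def]

/-- The strings `x`, `y` admit a cut at `m` marked ones each, such that at most `ε m / 2`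
ones are skipped and the contributions `segF` of the segment pairs add up to at least `-2`. -/
def BadCut (ε δ : ℝ) (m : ℕ) {n : ℕ} (x y : Fin n → Bool) : Prop :=
  ∃ s : Fin m → List Bool × List Bool,
    IsPre (pre fun j => (s j).1) x ∧ IsPre (pre fun j => (s j).2) y ∧
    (∑ j, (((s j).1.count true + (s j).2.count true : ℕ) : ℝ)) ≤ ε * m / 2 ∧
    -2 ≤ ∑ j, segF δ (s j)

lemma one_le_weight (ε δ η l : ℝ) (hη : 0 < η) (hη1 : η ≤ 1) (hl : 0 ≤ l) (m : ℕ)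
    (s : Fin m → List Bool × List Bool)
    (h1 : (∑ j, (((s j).1.count true + (s j).2.count true : ℕ) : ℝ)) ≤ ε * m / 2)
    (h2 : -2 ≤ ∑ j, segF δ (s j)) :
    1 ≤ Real.exp (2 * l) * η ^ (-(ε * m / 2)) *
      ∏ j, (η ^ ((s j).1.count true + (s j).2.count true) * Real.exp (l * segF δ (s j))) := by
  rw [Finset.prod_mul_distrib, ← Real.exp_sum, ← Finset.mul_sum, Finset.prod_pow_eq_pow_sum]
  have e1 : 1 ≤ Real.exp (2 * l) * Real.exp (l * ∑ j, segF δ (s j)) := by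
    rw [← Real.exp_add]
    apply Real.one_le_exp
    nlinarith
  have e2 : 1 ≤ η ^ (-(ε * m / 2)) * η ^ (∑ j, ((s j).1.count true + (s j).2.count true)) := by
    rw [← Real.rpow_natCast η, ← Real.rpow_add hη]
    apply Real.one_le_rpow_of_pos_of_le_one_of_nonpos hη hη1
    push_cast at h1 ⊢
    linarith
  calc (1:ℝ) = 1 * 1 := by norm_num
    _ ≤ _ := mul_le_mul e1 e2 (by norm_num) (by positivity)
    _ = _ := by ring

lemma card_badCut (ε δ η l : ℝ) (hη : 0 < η) (hη1 : η ≤ 1 / 4) (hl : 0 ≤ l) (m n : ℕ) :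
    ((univ.filter fun p : (Fin n → Bool) × (Fin n → Bool) => BadCut ε δ m p.1 p.2).card : ℝ≥0∞)
      ≤ 4 ^ n * (ENNReal.ofReal (Real.exp (2 * l) * η ^ (-(ε * m / 2))) *
        ENNReal.ofReal (1 + 4 * η - 1 / 64 * (1 - avg δ l)) ^ m) := by
  set C := ENNReal.ofReal (Real.exp (2 * l) * η ^ (-(ε * m / 2))) with hC
  let W : (Fin m → List Bool × List Bool) → ℝ≥0∞ := fun s => ENNReal.ofReal
    (∏ j, (η ^ ((s j).1.count true + (s j).2.count true) * Real.exp (l * segF δ (s j))))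
  calc ((univ.filter fun p : (Fin n → Bool) × (Fin n → Bool) => BadCut ε δ m p.1 p.2).card : ℝ≥0∞)
      = ∑ p : (Fin n → Bool) × (Fin n → Bool), if BadCut ε δ m p.1 p.2 then 1 else 0 := by
        rw [Finset.sum_boole]
    _ ≤ ∑ p : (Fin n → Bool) × (Fin n → Bool), ∑' s : Fin m → List Bool × List Bool,
          (if IsPre (pre fun j => (s j).1) p.1 ∧ IsPre (pre fun j => (s j).2) p.2 then
            C * W s else 0) := by
        refine Finset.sum_le_sum fun p _ => ?_
        split_ifs with h
        · obtain ⟨s, a1, a2, a3, a4⟩ := h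
          refine le_trans ?_ (ENNReal.le_tsum s)
          rw [if_pos ⟨a1, a2⟩, hC, ← ENNReal.ofReal_mul (by positivity), ← ENNReal.ofReal_one]
          exact ENNReal.ofReal_le_ofReal
            (one_le_weight ε δ η l hη (by linarith) hl m s a3 a4)
        · exact zero_le
    _ = ∑' s : Fin m → List Bool × List Bool,
          ((univ.filter fun p : (Fin n → Bool) × (Fin n → Bool) =>
            IsPre (pre fun j => (s j).1) p.1 ∧ IsPre (pre fun j => (s j).2) p.2).card : ℝ≥0∞)
            * (C * W s) := by
        rw [← Summable.tsum_finsetSum (fun _ _ => ENNReal.summable)]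
        refine tsum_congr fun s => ?_
        rw [← Finset.sum_filter, Finset.sum_const, nsmul_eq_mul]
    _ ≤ ∑' s : Fin m → List Bool × List Bool, 4 ^ n * C *
          ∏ j, (segBase η (s j).1 * segBase η (s j).2 *
            ENNReal.ofReal (Real.exp (l * segF δ (s j)))) := by
        refine ENNReal.tsum_le_tsum fun s => ?_
        set A := (univ.filter fun x : Fin n → Bool => IsPre (pre fun j => (s j).1) x) with hA
        set B := (univ.filter fun x : Fin n → Bool => IsPre (pre fun j => (s j).2) x) with hB
        have hAB : (univ.filter fun p : (Fin n → Bool) × (Fin n → Bool) =>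
            IsPre (pre fun j => (s j).1) p.1 ∧ IsPre (pre fun j => (s j).2) p.2) = A ×ˢ B := by
          ext p; simp [hA, hB]
        rw [hAB, Finset.card_product]
        have hcA := card_isPre n (pre fun j => (s j).1)
        have hcB := card_isPre n (pre fun j => (s j).2)
        rw [← hA] at hcA
        rw [← hB] at hcB
        have hreal : ((A.card * B.card : ℕ) : ℝ) ≤
            4 ^ n * ∏ j, ((1 / 2 : ℝ) ^ ((s j).1.length + 1) * (1 / 2) ^ ((s j).2.length + 1)) := by
          rw [Finset.prod_mul_distrib, Finset.prod_pow_eq_pow_sum, Finset.prod_pow_eq_pow_sum,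
            ← length_pre (fun j => (s j).1), ← length_pre (fun j => (s j).2),
            show (4:ℝ) ^ n = 2 ^ n * 2 ^ n by rw [← mul_pow]; norm_num, mul_mul_mul_comm]
          push_cast
          have aux : ∀ a L : ℕ, a * 2 ^ L ≤ 2 ^ n → (a : ℝ) ≤ 2 ^ n * (1 / 2) ^ L := by
            intro a L h
            rw [one_div, inv_pow, ← div_eq_mul_inv, le_div_iff₀ (by positivity)]
            exact_mod_cast h
          exact mul_le_mul (aux _ _ hcA) (aux _ _ hcB) (by positivity) (by positivity)
        have hprod : ∏ j, (segBase η (s j).1 * segBase η (s j).2 *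
            ENNReal.ofReal (Real.exp (l * segF δ (s j)))) = ENNReal.ofReal
            (∏ j, ((1 / 2 : ℝ) ^ ((s j).1.length + 1) * (1 / 2) ^ ((s j).2.length + 1))) * W s := by
          simp only [W]
          rw [← ENNReal.ofReal_mul (by positivity), ← Finset.prod_mul_distrib,
            ENNReal.ofReal_prod_of_nonneg (fun _ _ => by positivity)]
          refine Finset.prod_congr rfl fun j _ => ?_
          unfold segBase
          rw [← ENNReal.ofReal_mul (by positivity), ← ENNReal.ofReal_mul (by positivity)]
          congr 1
          rw [pow_add η]; ring
        rw [hprod]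
        have hE := ENNReal.ofReal_le_ofReal hreal
        rw [ENNReal.ofReal_natCast, ENNReal.ofReal_mul (by positivity),
          ENNReal.ofReal_pow (by norm_num), show ENNReal.ofReal 4 = 4 by simp] at hE
        calc _ ≤ _ := mul_le_mul_left hE (C * W s)
          _ = _ := by ring
    _ = 4 ^ n * (C * (∑' s : List Bool × List Bool,
          segBase η s.1 * segBase η s.2 * ENNReal.ofReal (Real.exp (l * segF δ s))) ^ m) := by
        rw [ENNReal.tsum_mul_left, mul_assoc, ← tsum_pi_prod]
    _ ≤ _ := by
        gcongr
        exact tsum_seg η δ l hη.le hη1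

/-! ### Cutting two strings at the aligned pairs of ones -/

/-- The cut points belonging to marked positions `P`: cut `0` is at `0`, and cut `j + 1` is
directly behind the `j`-th marked position. -/
def bd {m n : ℕ} (P : Fin m → Fin n) : ℕ → ℕ
  | 0 => 0
  | j + 1 => if h : j < m then (P ⟨j, h⟩ : ℕ) + 1 else 0

/-- The segment of `x` strictly between the marked positions `j - 1` and `j`. -/
def seg {m n : ℕ} (x : Fin n → Bool) (P : Fin m → Fin n) (j : Fin m) : List Bool :=
  (List.Ico (bd P j) (bd P (j + 1) - 1)).map (ext x)

lemma bd_succ {m n : ℕ} (P : Fin m → Fin n) (j : Fin m) : bd P (j + 1) = P j + 1 := by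
  simp [bd]

lemma ext_fin {n : ℕ} (x : Fin n → Bool) (j : Fin n) : ext x j = x j := by
  simp [_root_.ext]

lemma pre_cut (f : ℕ → Bool) (b : ℕ → ℕ) (b0 : b 0 = 0) (m : ℕ)
    (hb : ∀ j < m, b j < b (j + 1)) (hf : ∀ j < m, f (b (j + 1) - 1) = true) :
    pre (fun j : Fin m => (List.Ico (b j) (b (j + 1) - 1)).map f) = (List.Ico 0 (b m)).map f := by
  induction m with
  | zero => simp [pre, b0]
  | succ m ih =>
    have ih := ih (fun j hj => hb j (by omega)) (fun j hj => hf j (by omega))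
    unfold pre at ih ⊢
    have h1 := hb m (by omega)
    rw [List.ofFn_succ', List.concat_eq_append, List.flatten_append]
    simp only [Fin.val_castSucc, Fin.val_last]
    rw [ih, List.flatten_singleton, ← hf m (by omega),
      ← List.Ico.append_consecutive (Nat.zero_le (b m)) h1.le, List.map_append]
    congr 1
    have h2 := List.Ico.succ_top (n := b m) (m := b (m + 1) - 1) (by omega)
    rw [Nat.sub_add_cancel (by omega)] at h2
    rw [h2]
    simp

lemma bd_lt {m n : ℕ} {P : Fin m → Fin n} (hP : StrictMono P) (j : ℕ) (hj : j < m) :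
    bd P j < bd P (j + 1) := by
  cases j with
  | zero => simp [bd, hj]
  | succ i =>
    have : P ⟨i, by omega⟩ < P ⟨i + 1, hj⟩ := hP (by simp)
    simp only [bd, hj, show i < m by omega, dite_true]
    have := Fin.lt_def.1 this
    omega

lemma pre_seg {m n : ℕ} (x : Fin n → Bool) {P : Fin m → Fin n} (hP : StrictMono P)
    (hx : ∀ j, x (P j) = true) : pre (seg x P) = (List.Ico 0 (bd P m)).map (ext x) := by
  refine pre_cut (ext x) (bd P) rfl m (bd_lt hP) fun j hj => ?_
  have := bd_succ P ⟨j, hj⟩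
  simp only at this
  rw [this, Nat.add_sub_cancel, ext_fin, hx]

lemma bd_le {m n : ℕ} (P : Fin m → Fin n) (j : ℕ) : bd P j ≤ n := by
  cases j with
  | zero => simp [bd]
  | succ i =>
    simp only [bd]
    split_ifs with h
    · exact (P ⟨i, h⟩).2
    · simp

lemma isPre_seg {m n : ℕ} (x : Fin n → Bool) {P : Fin m → Fin n} (hP : StrictMono P)
    (hx : ∀ j, x (P j) = true) : IsPre (pre (seg x P)) x := by
  rw [pre_seg x hP hx]
  intro i hi
  have hi' : i < n := by
    have := bd_le P m
    simp at hi; omega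
  refine ⟨hi', ?_⟩
  simp [List.Ico, _root_.ext, hi']

lemma count_pre {m : ℕ} (s : Fin m → List Bool) :
    (pre s).count true = ∑ j, (s j).count true + m := by
  simp [pre, List.count_flatten, List.sum_ofFn, List.map_ofFn, Function.comp_def,
    Finset.sum_add_distrib]

lemma sum_count_seg_le {m n : ℕ} (x : Fin n → Bool) {P : Fin m → Fin n} (hP : StrictMono P)
    (hx : ∀ j, x (P j) = true) (T : Finset (Fin n))
    (hT : ∀ i, x i = true → (∀ j, P j ≠ i) → (∃ j, i ≤ P j) → i ∈ T) :
    ∑ j, (seg x P j).count true ≤ T.card := by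
  have h1 := count_pre (seg x P)
  rw [pre_seg x hP hx] at h1
  have h2 : ((List.Ico 0 (bd P m)).map (ext x)).count true ≤
      (univ.filter fun i : Fin n => x i = true ∧ (i : ℕ) < bd P m).card := by
    have : ((List.Ico 0 (bd P m)).map (ext x)).count true =
        ((Finset.range (bd P m)).filter fun i => ext x i = true).card := by
      rw [List.count, List.countP_map, List.Ico.zero_bot, Finset.card, Finset.filter_val,
        Finset.range_val, Multiset.range, Multiset.filter_coe, Multiset.coe_card,
        List.countP_eq_length_filter]
      congr 2
    rw [this]
    have hsub : ((Finset.range (bd P m)).filter fun i => ext x i = true) ⊆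
        (univ.filter fun i : Fin n => x i = true ∧ (i : ℕ) < bd P m).image Fin.val := by
      intro i hi
      simp only [Finset.mem_filter, Finset.mem_range] at hi
      have hin : i < n := hi.1.trans_le (bd_le P m)
      refine Finset.mem_image.2 ⟨⟨i, hin⟩, ?_, rfl⟩
      have := hi.2
      simp only [_root_.ext, hin, dite_true] at this
      simp [this, hi.1]
    exact (Finset.card_le_card hsub).trans Finset.card_image_le
  have h3 : (univ.filter fun i : Fin n => x i = true ∧ (i : ℕ) < bd P m) ⊆
      T ∪ univ.image P := by
    intro i hi
    simp only [Finset.mem_filter, Finset.mem_univ, true_and] at hi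
    by_cases hj : ∃ j, P j = i
    · obtain ⟨j, rfl⟩ := hj
      exact Finset.mem_union_right _ (Finset.mem_image_of_mem _ (Finset.mem_univ _))
    · refine Finset.mem_union_left _ (hT i hi.1 (fun j h => hj ⟨j, h⟩) ?_)
      cases m with
      | zero => simp [bd] at hi
      | succ m =>
        refine ⟨Fin.last m, ?_⟩
        have h := hi.2
        simp only [bd, Nat.lt_succ_self, dite_true] at h
        exact Fin.le_def.2 (Nat.lt_succ_iff.1 h)
  have h4 := (Finset.card_le_card h3).trans (Finset.card_union_le _ _)
  have h5 : (univ.image P).card ≤ m := by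
    simpa using (Finset.card_image_le (s := univ) (f := P))
  omega

/-- For `j` with a predecessor `i`, the segment consists of zeros iff all letters between
the corresponding marked positions are zeros. -/
lemma seg_eq_replicate {m n : ℕ} (x : Fin n → Bool) (P : Fin m → Fin n)
    {i j : Fin m} (hij : (j : ℕ) = i + 1) :
    seg x P j = List.replicate (seg x P j).length false ↔
      ∀ t : Fin n, P i < t → t < P j → x t = false := by
  rw [List.eq_replicate_length]
  have hbj : bd P j = P i + 1 := by rw [hij, bd_succ]
  simp only [seg, List.mem_map, List.Ico.mem, bd_succ, hbj, Nat.add_sub_cancel]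
  constructor
  · intro h t h1 h2
    rw [← ext_fin x t]
    exact h _ ⟨t, ⟨Fin.lt_def.1 h1, Fin.lt_def.1 h2⟩, rfl⟩
  · rintro h b ⟨t, ⟨h1, h2⟩, rfl⟩
    have ht : t < n := h2.trans (P j).2
    have := h ⟨t, ht⟩ (Fin.lt_def.2 h1) (Fin.lt_def.2 h2)
    simpa [_root_.ext, ht] using this

lemma length_seg {m n : ℕ} (x : Fin n → Bool) {P : Fin m → Fin n}
    {i j : Fin m} (hij : (j : ℕ) = i + 1) :
    (seg x P j).length = (P j : ℕ) - (P i + 1) := by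
  have hbj : bd P j = P i + 1 := by rw [hij, bd_succ]
  simp [seg, bd_succ, hbj]

lemma eq_replicate_five (u : List Bool) :
    u = List.replicate 5 false ↔ u.length = 5 ∧ u = List.replicate u.length false := by
  constructor
  · rintro rfl; simp
  · rintro ⟨h1, h2⟩; rw [h1] at h2; exact h2

lemma badCut_of_inV (ε δ : ℝ) (hδ : δ < 31 / 32) {n k : ℕ} (x y : Fin n → Bool)
    (π ν : Fin k → Fin n) (hπ : StrictMono π) (hν : StrictMono ν) (hV : inV ε x y π ν)
    (hbad : (N5ltCount x y π ν : ℝ) ≤ (31 / 32 - δ) * N5count x y π ν) :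
    BadCut ε δ (numMatched x y π ν) x y := by
  set M := univ.filter (matchedPair x y π ν) with hM
  have hm : numMatched x y π ν = M.card := rfl
  set m := numMatched x y π ν with hmdef
  let e : Fin m ↪o Fin k := M.orderEmbOfFin hm.symm
  have heM : ∀ j, matchedPair x y π ν (e j) := fun j =>
    (Finset.mem_filter.1 (M.orderEmbOfFin_mem hm.symm j)).2
  have hsurj : ∀ i, matchedPair x y π ν i → ∃ j, e j = i := by
    intro i hi
    have : i ∈ Set.range e := by
      rw [Finset.range_orderEmbOfFin]
      exact Finset.mem_coe.2 (Finset.mem_filter.2 ⟨Finset.mem_univ _, hi⟩)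
    exact this
  let P : Fin m → Fin n := fun j => π (e j)
  let Q : Fin m → Fin n := fun j => ν (e j)
  have hP : StrictMono P := hπ.comp e.strictMono
  have hQ : StrictMono Q := hν.comp e.strictMono
  have hxP : ∀ j, x (P j) = true := fun j => (heM j).1
  have hyQ : ∀ j, y (Q j) = true := fun j => (heM j).2
  refine ⟨fun j => (seg x P j, seg y Q j), isPre_seg x hP hxP, isPre_seg y hQ hyQ, ?_, ?_⟩
  · have c1 : ∑ j, (seg x P j).count true ≤ skippedOnesX x y π ν := by
      refine sum_count_seg_le x hP hxP _ fun i hi hne hle => ?_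
      obtain ⟨j, hj⟩ := hle
      simp only [Finset.mem_filter, Finset.mem_univ, true_and]
      refine ⟨hi, (Fin.le_def.1 hj).trans ?_, ?_⟩
      · exact Finset.le_sup (f := fun i => (π i : ℕ))
          (Finset.mem_filter.2 ⟨Finset.mem_univ _, heM j⟩)
      · intro i' hi' h
        obtain ⟨j', rfl⟩ := hsurj i' hi'
        exact hne j' h
    have c2 : ∑ j, (seg y Q j).count true ≤ skippedOnesY x y π ν := by
      refine sum_count_seg_le y hQ hyQ _ fun i hi hne hle => ?_
      obtain ⟨j, hj⟩ := hle
      simp only [Finset.mem_filter, Finset.mem_univ, true_and]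
      refine ⟨hi, (Fin.le_def.1 hj).trans ?_, ?_⟩
      · exact Finset.le_sup (f := fun i => (ν i : ℕ))
          (Finset.mem_filter.2 ⟨Finset.mem_univ _, heM j⟩)
      · intro i' hi' h
        obtain ⟨j', rfl⟩ := hsurj i' hi'
        exact hne j' h
    refine le_trans ?_ hV.2
    have c3 := add_le_add c1 c2
    rw [← Finset.sum_add_distrib] at c3
    exact_mod_cast c3
  · set D := univ.filter fun j : Fin m => seg x P j = List.replicate 5 false ∧
      seg y Q j = List.replicate (seg y Q j).length false with hD
    set D' := D.filter fun j => (seg y Q j).length < 5 with hD'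
    have hsum : ∑ j, segF δ (seg x P j, seg y Q j) = (31 / 32 - δ) * D.card - D'.card := by
      unfold segF
      rw [← Finset.sum_filter]
      simp only
      rw [← hD, Finset.sum_sub_distrib, Finset.sum_const, nsmul_eq_mul]
      have : ∑ j ∈ D, (if (seg y Q j).length < 5 then (0:ℝ) else 1) = D.card - D'.card := by
        have h1 : ∀ j ∈ D, (if (seg y Q j).length < 5 then (0:ℝ) else 1) =
            1 - if (seg y Q j).length < 5 then 1 else 0 := by
          intro j _; split_ifs <;> norm_num
        rw [Finset.sum_congr rfl h1, Finset.sum_sub_distrib, Finset.sum_boole]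
        simp [hD']
      rw [this]; ring
    let g : Fin m → Fin k × Fin k := fun j => (e ⟨j - 1, by omega⟩, e j)
    have hg : Function.Injective g := by
      intro a b hab
      exact e.injective (Prod.ext_iff.1 hab).2
    have d1 : N5count x y π ν ≤ D.card := by
      refine le_trans (Finset.card_le_card (t := D.image g) ?_) Finset.card_image_le
      rintro ⟨i1, i2⟩ hp
      simp only [Finset.mem_filter, Finset.mem_product, Finset.mem_univ, true_and] at hp
      obtain ⟨hlt, hm1, hm2, h6, hz1, hz2⟩ := hp
      obtain ⟨j1, rfl⟩ := hsurj i1 hm1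
      obtain ⟨j2, rfl⟩ := hsurj i2 hm2
      have hj : j1 < j2 := e.lt_iff_lt.1 hlt
      -- A marked one strictly in between would contradict `hz1`.
      have hcons : (j2 : ℕ) = j1 + 1 := by
        by_contra hne
        have hlt' := Fin.lt_def.1 hj
        have := hz1 (P ⟨j1 + 1, by omega⟩) (hP (Fin.lt_def.2 (by simp)))
          (hP (Fin.lt_def.2 (by simp; omega)))
        rw [hxP] at this
        exact Bool.noConfusion this
      refine Finset.mem_image.2 ⟨j2, ?_, ?_⟩
      · refine Finset.mem_filter.2 ⟨Finset.mem_univ _, ?_, ?_⟩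
        · rw [eq_replicate_five]
          refine ⟨?_, (seg_eq_replicate x P hcons).2 hz1⟩
          rw [length_seg x hcons]
          change (π (e j2) : ℕ) - ((π (e j1) : ℕ) + 1) = 5
          omega
        · exact (seg_eq_replicate y Q hcons).2 hz2
      · simp only [g, Prod.mk.injEq, and_true]
        congr 1
        exact Fin.ext (by simp; omega)
    have d2 : D'.card ≤ N5ltCount x y π ν + 1 := by
      -- The first segment is not enclosed by two marked ones.
      have hle : (D'.filter fun j : Fin m => (j : ℕ) ≠ 0).card ≤ N5ltCount x y π ν := by
        refine Finset.card_le_card_of_injOn g ?_ hg.injOn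
        intro j hj
        simp only [coe_filter, Finset.mem_filter, hD', hD, Finset.mem_univ, true_and,
          Set.mem_ofPred_eq] at hj
        obtain ⟨⟨⟨hu, hw⟩, h5⟩, h0⟩ := hj
        have hcons : (j : ℕ) = (⟨j - 1, by omega⟩ : Fin m) + 1 := by simp; omega
        rw [eq_replicate_five, seg_eq_replicate x P hcons, length_seg x hcons] at hu
        rw [seg_eq_replicate y Q hcons] at hw
        rw [length_seg y hcons] at h5
        have hlt : (⟨j - 1, by omega⟩ : Fin m) < j := Fin.lt_def.2 (by simp; omega)
        simp only [Finset.coe_filter, Finset.mem_product, Finset.mem_univ, true_and,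
          Set.mem_ofPred_eq, g]
        have hPl := Fin.lt_def.1 (hP hlt)
        have hQl := Fin.lt_def.1 (hQ hlt)
        refine ⟨e.strictMono hlt, heM _, heM _, ?_, hu.2, hw, ?_⟩
        · have := hu.1
          change (P j : ℕ) = P _ + 6
          omega
        · change (Q j : ℕ) < Q _ + 6
          omega
      have h0 : (D'.filter fun j : Fin m => ¬ (j : ℕ) ≠ 0).card ≤ 1 := by
        refine Finset.card_le_one.2 fun a ha b hb => Fin.ext ?_
        have h1 := (Finset.mem_filter.1 ha).2
        have h2 := (Finset.mem_filter.1 hb).2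
        omega
      have := Finset.card_filter_add_card_filter_not (s := D') (fun j : Fin m => (j : ℕ) ≠ 0)
      omega
    rw [hsum]
    have d1' : (N5count x y π ν : ℝ) ≤ D.card := by exact_mod_cast d1
    have d2' : (D'.card : ℝ) ≤ N5ltCount x y π ν + 1 := by exact_mod_cast d2
    have := mul_le_mul_of_nonneg_left d1' (by linarith : (0:ℝ) ≤ 31 / 32 - δ)
    linarith

/-! ### The exponential estimate -/

lemma numMatched_le {n k : ℕ} (x y : Fin n → Bool) (π ν : Fin k → Fin n) (hπ : StrictMono π) :
    numMatched x y π ν ≤ n := by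
  have h1 : numMatched x y π ν ≤ k := by
    unfold numMatched
    simpa using Finset.card_le_univ (univ.filter (matchedPair x y π ν))
  have h2 : k ≤ n := by simpa using Fintype.card_le_of_injective π hπ.injective
  omega

/-- An exponential bound with a prefactor, together with the bound `1 - 4⁻ⁿ` for small `n`,
gives an exponential bound without a prefactor. -/
lemma exists_rate (p : ℕ → ℝ) (C a : ℝ) (ha : 0 < a)
    (h1 : ∀ n : ℕ, p n ≤ C * Real.exp (-(2 * a) * n)) (h0 : p 0 ≤ 1)
    (h2 : ∀ n : ℕ, 1 ≤ n → p n ≤ 1 - (1 / 4) ^ n) :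
    ∃ γ > 0, ∀ n : ℕ, p n ≤ Real.exp (-γ * n) := by
  have htend : Filter.Tendsto (fun n : ℕ => C * Real.exp (-a) ^ n) Filter.atTop (nhds 0) := by
    have := (tendsto_pow_atTop_nhds_zero_of_lt_one (Real.exp_nonneg (-a))
      (Real.exp_lt_one_iff.2 (by linarith))).const_mul C
    simpa using this
  obtain ⟨N, hN⟩ := Filter.eventually_atTop.1
    (htend.eventually (eventually_le_nhds (show (0:ℝ) < 1 by norm_num)))
  refine ⟨min a ((1 / 4) ^ N / (N + 1)), by positivity, fun n => ?_⟩
  set γ := min a ((1 / 4 : ℝ) ^ N / (N + 1)) with hγ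
  have hγ0 : 0 < γ := by positivity
  rcases Nat.eq_zero_or_pos n with rfl | hn
  · simpa using h0
  by_cases hnN : N ≤ n
  · have e1 := hN n hnN
    rw [← Real.exp_nat_mul] at e1
    calc p n ≤ C * Real.exp (-(2 * a) * n) := h1 n
      _ = (C * Real.exp (n * -a)) * Real.exp (-a * n) := by
        rw [mul_assoc, ← Real.exp_add]; congr 2; ring
      _ ≤ 1 * Real.exp (-a * n) := by gcongr
      _ ≤ Real.exp (-γ * n) := by
        rw [one_mul]
        apply Real.exp_le_exp.2
        have : γ ≤ a := min_le_left _ _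
        have : (0:ℝ) ≤ n := n.cast_nonneg
        nlinarith
  · push Not at hnN
    have e1 : (1 / 4 : ℝ) ^ N ≤ (1 / 4) ^ n :=
      pow_le_pow_of_le_one (by norm_num) (by norm_num) hnN.le
    have e2 : γ * n ≤ (1 / 4) ^ N := by
      have hg : γ ≤ (1 / 4) ^ N / (N + 1) := min_le_right _ _
      rw [le_div_iff₀ (by positivity)] at hg
      have : (n : ℝ) ≤ N + 1 := by exact_mod_cast (by omega : n ≤ N + 1)
      nlinarith
    have e3 := Real.add_one_le_exp (-γ * n)
    have := h2 n hn
    linarith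

lemma card_bad_le (ε δ η l q : ℝ) (hη : 0 < η) (hη1 : η ≤ 1 / 4) (hl : 0 ≤ l)
    (hq : q = 1 + 4 * η - 1 / 64 * (1 - avg δ l)) (hq0 : 0 < q) (hq1 : q < 1)
    (hε : ε * -Real.log η ≤ -Real.log q) (n : ℕ)
    (B : Finset ((Fin n → Bool) × (Fin n → Bool)))
    (hB : ∀ p ∈ B, ∃ m, m ≤ n ∧ n ≤ 4 * m ∧ BadCut ε δ m p.1 p.2) :
    (B.card : ℝ) / 4 ^ n ≤
      (Real.exp (2 * l) / (1 - Real.exp (Real.log q / 4))) *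
        Real.exp (-(2 * (-Real.log q / 32)) * n) := by
  have hlq : Real.log q < 0 := Real.log_neg hq0 hq1
  set t := Real.exp (Real.log q / 4) with ht
  have ht1 : t < 1 := Real.exp_lt_one_iff.2 (by linarith)
  have ht0 : 0 ≤ t := Real.exp_nonneg _
  have hsub : B ⊆ ((range (n + 1)).filter fun m => n ≤ 4 * m).biUnion fun m =>
      univ.filter fun p => BadCut ε δ m p.1 p.2 := by
    intro p hp
    obtain ⟨m, h1, h2, h3⟩ := hB p hp
    simp only [Finset.mem_biUnion, Finset.mem_filter, Finset.mem_range, Finset.mem_univ, true_and]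
    exact ⟨m, ⟨by omega, h2⟩, h3⟩
  have hcard := (Finset.card_le_card hsub).trans Finset.card_biUnion_le
  have hm : ∀ m ∈ (range (n + 1)).filter fun m => n ≤ 4 * m,
      ((univ.filter fun p : (Fin n → Bool) × (Fin n → Bool) => BadCut ε δ m p.1 p.2).card : ℝ) ≤
      4 ^ n * (Real.exp (2 * l) * Real.exp (-(2 * (-Real.log q / 32)) * n) * t ^ m) := by
    intro m hm
    have hm4 : (n : ℝ) ≤ 4 * m := by exact_mod_cast (Finset.mem_filter.1 hm).2
    have h := card_badCut ε δ η l hη hη1 hl m n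
    rw [← hq, ← ENNReal.ofReal_pow hq0.le, ← ENNReal.ofReal_mul (by positivity),
      show (4 : ℝ≥0∞) = ENNReal.ofReal 4 by simp, ← ENNReal.ofReal_pow (by norm_num),
      ← ENNReal.ofReal_mul (by positivity), ← ENNReal.ofReal_natCast,
      ENNReal.ofReal_le_ofReal_iff (by positivity)] at h
    refine h.trans ?_
    rw [mul_assoc (Real.exp (2 * l)), mul_assoc (Real.exp (2 * l))]
    gcongr 4 ^ n * (Real.exp (2 * l) * ?_)
    have e1 : q ^ m = Real.exp (m * Real.log q) := by
      rw [Real.exp_nat_mul, Real.exp_log hq0]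
    rw [e1, Real.rpow_def_of_pos hη, ht, ← Real.exp_nat_mul, ← Real.exp_add, ← Real.exp_add]
    apply Real.exp_le_exp.2
    have hm0 : (0:ℝ) ≤ m := m.cast_nonneg
    have e2 := mul_le_mul_of_nonneg_left hε hm0
    have e3 := mul_le_mul_of_nonpos_left hm4 hlq.le
    nlinarith
  have hsum : (B.card : ℝ) ≤ 4 ^ n * (Real.exp (2 * l) *
      Real.exp (-(2 * (-Real.log q / 32)) * n) * (1 - t)⁻¹) := by
    calc (B.card : ℝ) ≤ ∑ m ∈ (range (n + 1)).filter fun m => n ≤ 4 * m,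
          ((univ.filter fun p : (Fin n → Bool) × (Fin n → Bool) =>
            BadCut ε δ m p.1 p.2).card : ℝ) := by exact_mod_cast hcard
      _ ≤ ∑ m ∈ (range (n + 1)).filter fun m => n ≤ 4 * m,
          4 ^ n * (Real.exp (2 * l) * Real.exp (-(2 * (-Real.log q / 32)) * n) * t ^ m) :=
        Finset.sum_le_sum hm
      _ = 4 ^ n * (Real.exp (2 * l) * Real.exp (-(2 * (-Real.log q / 32)) * n) *
          ∑ m ∈ (range (n + 1)).filter fun m => n ≤ 4 * m, t ^ m) := by
        simp_rw [Finset.mul_sum]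
      _ ≤ _ := by
        gcongr
        rw [← tsum_geometric_of_lt_one ht0 ht1]
        exact (summable_geometric_of_lt_one ht0 ht1).sum_le_tsum _ (fun _ _ => by positivity)
  rw [div_le_iff₀ (by positivity)]
  refine hsum.trans (le_of_eq ?_)
  rw [div_eq_mul_inv]
  ring

lemma probXY_eq (n : ℕ) (E : (Fin n → Bool) → (Fin n → Bool) → Prop) :
    probXY n E = 1 - ((univ.filter fun p : (Fin n → Bool) × (Fin n → Bool) =>
      ¬ E p.1 p.2).card : ℝ) / 4 ^ n := by
  have h := Finset.card_filter_add_card_filter_not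
    (s := (univ : Finset ((Fin n → Bool) × (Fin n → Bool)))) (fun p => E p.1 p.2)
  have hc : (univ : Finset ((Fin n → Bool) × (Fin n → Bool))).card = 4 ^ n := by
    simp [← mul_pow]
  rw [hc] at h
  have h' : ((univ.filter fun p : (Fin n → Bool) × (Fin n → Bool) => E p.1 p.2).card : ℝ) +
    ((univ.filter fun p : (Fin n → Bool) × (Fin n → Bool) => ¬ E p.1 p.2).card : ℝ) = 4 ^ n := by
    exact_mod_cast h
  unfold probXY
  rw [eq_sub_iff_add_eq, ← add_div, h', div_self (by positivity)]

end PfAux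


/-- for every `ε₁ > 0` there exists `ε₀ > 0` such that for every
`ε ∈ (0, ε₀)` with `S > 16/ε` there is a constant `γ_c > 0`, independent of `n`, with
`P(Cⁿ) ≥ 1 - e^{-γ_c n}` for all `n`, where `Cⁿ` is the event that every optimal alignment
`v ∈ V` of `X` and `Y` satisfies `N₅<(v)/N₅(v) ≥ 31/32 - ε₁/4`. -/
theorem prob_Cn_event (ε₁ : ℝ) (hε₁ : 0 < ε₁) :
    ∃ ε₀ > (0 : ℝ), ∀ ε : ℝ, 0 < ε → ε < ε₀ → ∀ S : ℝ, 16 / ε < S →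
      ∃ γc > (0 : ℝ), ∀ n : ℕ,
        1 - Real.exp (-γc * n) ≤ probXY n (fun x y =>
          ∀ (k : ℕ) (π ν : Fin k → Fin n), IsOptimal S x y π ν → inV ε x y π ν →
            31 / 32 - ε₁ / 4 ≤ (N5ltCount x y π ν : ℝ) / (N5count x y π ν : ℝ)) := by
  rcases le_or_gt (31 / 32) (ε₁ / 4) with hbig | hsmall
  · -- The lower bound is nonpositive, so the event is everything.
    refine ⟨1, one_pos, fun ε _ _ S _ => ⟨1, one_pos, fun n => ?_⟩⟩
    rw [PfAux.probXY_eq, Finset.filter_eq_empty_iff.2]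
    · have := Real.exp_nonneg (-1 * (n : ℝ))
      simpa using this
    · intro p _ h
      apply h
      intro k π ν _ _
      have : (0 : ℝ) ≤ (N5ltCount p.1 p.2 π ν : ℝ) / (N5count p.1 p.2 π ν : ℝ) := by positivity
      linarith
  set δ := ε₁ / 4 with hδ
  have hδ0 : 0 < δ := by positivity
  set l := δ / 2 with hl
  have havg : PfAux.avg δ l < 1 := PfAux.avg_lt_one δ hδ0 hsmall
  have havg0 : 0 ≤ PfAux.avg δ l := by unfold PfAux.avg; positivity
  set κ := 1 / 64 * (1 - PfAux.avg δ l) with hκ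
  -- The factor `1 + 4 η` due to skipped ones uses up only half of the gain `κ`: `q = 1 - κ / 2`.
  set η := κ / 8 with hη
  have hκ0 : 0 < κ := by rw [hκ]; linarith
  have hκ1 : κ ≤ 1 / 64 := by rw [hκ]; linarith
  have hη0 : 0 < η := by positivity
  have hη1 : η ≤ 1 / 4 := by linarith
  set q := 1 + 4 * η - 1 / 64 * (1 - PfAux.avg δ l) with hq
  have hq1 : q < 1 := by linarith
  have hq0 : 0 < q := by linarith
  have hlη : 0 < -Real.log η := by linarith [Real.log_neg hη0 (by linarith)]
  have hlq : 0 < -Real.log q := by linarith [Real.log_neg hq0 hq1]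
  refine ⟨min 1 (-Real.log q / -Real.log η), lt_min one_pos (div_pos hlq hlη),
    fun ε hε hεlt S _ => ?_⟩
  have hε1 : ε < 1 := hεlt.trans_le (min_le_left _ _)
  have hε2 : ε * -Real.log η ≤ -Real.log q := by
    rw [← le_div_iff₀ hlη]
    exact (hεlt.trans_le (min_le_right _ _)).le
  let E : (n : ℕ) → (Fin n → Bool) → (Fin n → Bool) → Prop := fun n x y =>
    ∀ (k : ℕ) (π ν : Fin k → Fin n), IsOptimal S x y π ν → inV ε x y π ν →
      31 / 32 - δ ≤ (N5ltCount x y π ν : ℝ) / (N5count x y π ν : ℝ)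
  let p : ℕ → ℝ := fun n => ((univ.filter fun z : (Fin n → Bool) × (Fin n → Bool) =>
    ¬ E n z.1 z.2).card : ℝ) / 4 ^ n
  have hprob : ∀ n, probXY n (E n) = 1 - p n := fun n => PfAux.probXY_eq n (E n)
  have hle1 : ∀ n, p n ≤ 1 := by
    intro n
    have : 0 ≤ probXY n (E n) := by unfold probXY; positivity
    linarith [hprob n]
  have hbad : ∀ n, ∀ z ∈ (univ.filter fun z : (Fin n → Bool) × (Fin n → Bool) =>
      ¬ E n z.1 z.2), ∃ m, m ≤ n ∧ n ≤ 4 * m ∧ PfAux.BadCut ε δ m z.1 z.2 := by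
    intro n z hz
    have hz := (Finset.mem_filter.1 hz).2
    simp only [E] at hz
    push Not at hz
    obtain ⟨k, π, ν, ho, hV, hlt⟩ := hz
    refine ⟨_, PfAux.numMatched_le z.1 z.2 π ν ho.1, ?_,
      PfAux.badCut_of_inV ε δ hsmall z.1 z.2 π ν ho.1 ho.2.1 hV ?_⟩
    · have h1 := hV.1
      have h2 : (0 : ℝ) ≤ n := n.cast_nonneg
      have : (n : ℝ) ≤ 4 * (numMatched z.1 z.2 π ν : ℕ) := by nlinarith
      exact_mod_cast this
    · rcases Nat.eq_zero_or_pos (N5count z.1 z.2 π ν) with h0 | h0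
      · -- `N₅< ≤ N₅`, so both vanish.
        have hsub : N5ltCount z.1 z.2 π ν ≤ N5count z.1 z.2 π ν := by
          refine Finset.card_le_card fun a ha => ?_
          rw [Finset.mem_filter] at ha ⊢
          exact ⟨ha.1, ha.2.1, ha.2.2.1, ha.2.2.2.1, ha.2.2.2.2.1, ha.2.2.2.2.2.1,
            ha.2.2.2.2.2.2.1⟩
        have h3 : N5ltCount z.1 z.2 π ν = 0 := by omega
        simp [h0, h3]
      · have h0' : (0 : ℝ) < N5count z.1 z.2 π ν := by exact_mod_cast h0
        exact ((div_lt_iff₀ h0').1 hlt).le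
  have hlow : ∀ n : ℕ, 1 ≤ n → p n ≤ 1 - (1 / 4) ^ n := by
    -- For two all-zero strings no ones can be aligned, so no alignment lies in `V`.
    intro n hn
    have hmem : 1 ≤ (univ.filter fun z : (Fin n → Bool) × (Fin n → Bool) =>
        E n z.1 z.2).card := by
      refine Finset.card_pos.2 ⟨(fun _ => false, fun _ => false), ?_⟩
      refine Finset.mem_filter.2 ⟨Finset.mem_univ _, fun k π ν _ hV => ?_⟩
      exfalso
      have h1 := hV.1
      have h0 : numMatched (fun _ : Fin n => false) (fun _ => false) π ν = 0 := by
        simp [numMatched, matchedPair]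
      rw [h0] at h1
      have hn' : (1 : ℝ) ≤ n := by exact_mod_cast hn
      push_cast at h1
      nlinarith
    have h4 : (1 / 4 : ℝ) ^ n ≤ probXY n (E n) := by
      unfold probXY
      rw [one_div, inv_pow, ← one_div]
      gcongr
      exact_mod_cast hmem
    linarith [hprob n]
  obtain ⟨γ, hγ, h⟩ := PfAux.exists_rate p _ (-Real.log q / 32) (by positivity)
    (fun n => PfAux.card_bad_le ε δ η l q hη0 hη1 (by positivity) hq hq0 hq1 hε2 n _ (hbad n))
    (hle1 0) hlow
  refine ⟨γ, hγ, fun n => ?_⟩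
  have h1 := hprob n
  have h2 := h n
  change 1 - Real.exp (-γ * n) ≤ probXY n (E n)
  linarith
end
end
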